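/- arXiv:1501.03774 — 4 statements merged into one kernel-verified Lean document; each statement's English description precedes it below -/
import Mathlib

section
/- Let P*₁₀(u,v) denote the g-edge obtained from the Petersen graph by deleting one edge uv, with terminals u and v. Then the open 5-capacity of P*₁₀(u,v) equals the interval (4,1) of ℝ/5ℤ. -/
open Finset


open Finset

/-- A finite multigraph given with a reference orientation: each edge `e` goes
from `src e` to `tgt e`.  An orientation of the graph is a sign function
`σ : E → ℤˣ` telling, for each edge, whether it keeps (`1`) or reverses (`-1`)
its reference direction. -/
structure Multigraph where
  V : Type
  E : Type
  [fintV : Fintype V]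
  [fintE : Fintype E]
  [decV : DecidableEq V]
  [decE : DecidableEq E]
  src : E → V
  tgt : E → V

attribute [instance] Multigraph.fintV Multigraph.fintE Multigraph.decV Multigraph.decE

/-- `f` is a flow with respect to the reference orientation: at every vertex the
sum over outgoing edges equals the sum over incoming edges. -/
def Multigraph.IsFlow (G : Multigraph) {M : Type*} [AddCommMonoid M] (f : G.E → M) : Prop :=
  ∀ v : G.V,
    ∑ e ∈ Finset.univ.filter (fun e => G.src e = v), f e =
    ∑ e ∈ Finset.univ.filter (fun e => G.tgt e = v), f e

/-- `f` is a flow on the orientation `σ` of `G` (values of `f` are read in the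
direction given by `σ`). -/
def Multigraph.IsFlowOn (G : Multigraph) {M : Type*} [AddCommGroup M]
    (σ : G.E → ℤˣ) (f : G.E → M) : Prop :=
  G.IsFlow (fun e => ((σ e : ℤ) • f e))

/-- The open interval `(a,b)` of `ℝ/rℤ`: the points traversed strictly clockwise
from `a` to `b`, with the convention `(a,a) = ℝ/rℤ \ {a}`. -/
noncomputable def openArc (r a b : ℝ) : Set (AddCircle r) :=
  (fun t : ℝ => (t : AddCircle r)) '' Set.Ioo a (a + (r - Int.fract ((a - b) / r) * r))

/-- The closed interval `[a,b]` of `ℝ/rℤ`: the points traversed clockwise from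
`a` to `b`, endpoints included, with the convention `[a,a] = {a}`. -/
noncomputable def closedArc (r a b : ℝ) : Set (AddCircle r) :=
  (fun t : ℝ => (t : AddCircle r)) '' Set.Icc a (a + Int.fract ((b - a) / r) * r)

/-- `G` has a circular nowhere-zero `r`-flow: an orientation together with a
real-valued flow all of whose values lie in `[1, r-1]`. -/
def Multigraph.HasCNZF (G : Multigraph) (r : ℝ) : Prop :=
  ∃ (σ : G.E → ℤˣ) (f : G.E → ℝ), G.IsFlowOn σ f ∧ ∀ e, f e ∈ Set.Icc (1:ℝ) (r - 1)

/-- The circular flow number of `G`, as an extended real (`⊤` if `G` admits no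
circular nowhere-zero `r`-flow for any `r`, e.g. if `G` has a bridge). -/
noncomputable def circFlowNumber (G : Multigraph) : EReal :=
  sInf {x : EReal | ∃ r : ℝ, x = (r : EReal) ∧ G.HasCNZF r}

/-- The graph `G ∪ e₀` obtained from `G` by adding one extra edge `e₀ = none`
joining `u` to `v`. -/
def Multigraph.addEdge (G : Multigraph) (u v : G.V) : Multigraph where
  V := G.V
  E := Option G.E
  src := fun e => e.elim u G.src
  tgt := fun e => e.elim v G.tgt

/-- The capacity of the capacitated g-edge `(G, cap)` with terminals `u,v`:
all values `f e₀` of modular flows `f` on `G ∪ e₀` (over all orientations) whose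
value on each edge `e` of `G` lies in the prescribed set `cap e`. -/
def CPcap (r : ℝ) (G : Multigraph) (cap : G.E → Set (AddCircle r)) (u v : G.V) :
    Set (AddCircle r) :=
  {t | ∃ (σ : Option G.E → ℤˣ) (f : Option G.E → AddCircle r),
        (G.addEdge u v).IsFlowOn σ f ∧ (∀ e : G.E, f (some e) ∈ cap e) ∧ f none = t}

/-- The open `r`-capacity `CP_r(G_{u,v})` of the g-edge `G_{u,v}`. -/
noncomputable def CP (r : ℝ) (G : Multigraph) (u v : G.V) : Set (AddCircle r) :=
  CPcap r G (fun _ => openArc r 1 (r - 1)) u v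

/-- A capacitated graph `(G, cap)` admits a flow respecting all capacities
(for `cap e = (1,4) ⊆ ℝ/5ℤ` everywhere this is a sub-5-MCNZF). -/
def HasCapFlow (r : ℝ) (G : Multigraph) (cap : G.E → Set (AddCircle r)) : Prop :=
  ∃ (σ : G.E → ℤˣ) (f : G.E → AddCircle r), G.IsFlowOn σ f ∧ ∀ e, f e ∈ cap e

/-- Deletion of the edge `e₀`. -/
def Multigraph.deleteEdge (G : Multigraph) (e₀ : G.E) : Multigraph where
  V := G.V
  E := {e : G.E // e ≠ e₀}
  src := fun e => G.src e.1
  tgt := fun e => G.tgt e.1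

/-- Degree of a vertex (loops count twice). -/
def Multigraph.degree (G : Multigraph) (v : G.V) : ℕ :=
  (Finset.univ.filter (fun e => G.src e = v)).card +
  (Finset.univ.filter (fun e => G.tgt e = v)).card

/-- The tail of edge `e` in the orientation `σ`. -/
def Multigraph.osrc (G : Multigraph) (σ : G.E → ℤˣ) (e : G.E) : G.V :=
  if σ e = 1 then G.src e else G.tgt e

/-- The head of edge `e` in the orientation `σ`. -/
def Multigraph.otgt (G : Multigraph) (σ : G.E → ℤˣ) (e : G.E) : G.V :=
  if σ e = 1 then G.tgt e else G.src e

/-- An injective key used to pick one reference direction for each edge of the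
Petersen graph. -/
def pkey (s : Finset (Fin 5)) : ℕ := ∑ i ∈ s, 2 ^ (i : ℕ)

/-- The Petersen graph: the Kneser graph on the 2-element subsets of a 5-element
set, two subsets adjacent when disjoint (each edge listed once, in the direction
of increasing key). -/
def petersen : Multigraph where
  V := {s : Finset (Fin 5) // s.card = 2}
  E := {p : {s : Finset (Fin 5) // s.card = 2} × {s : Finset (Fin 5) // s.card = 2} //
          Disjoint p.1.1 p.2.1 ∧ pkey p.1.1 < pkey p.2.1}
  src := fun p => p.1.1
  tgt := fun p => p.1.2

namespace PetCap

def S : Fin 15 → Fin 10 := ![0, 0, 0, 1, 1, 1, 2, 2, 2, 3, 3, 4, 4, 5, 5]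
def T : Fin 15 → Fin 10 := ![5, 8, 9, 4, 7, 9, 3, 6, 9, 7, 8, 6, 8, 6, 7]

def vV : Fin 10 → petersen.V := ![⟨{0, 1}, by decide⟩, ⟨{0, 2}, by decide⟩, ⟨{1, 2}, by decide⟩, ⟨{0, 3}, by decide⟩, ⟨{1, 3}, by decide⟩, ⟨{2, 3}, by decide⟩, ⟨{0, 4}, by decide⟩, ⟨{1, 4}, by decide⟩, ⟨{2, 4}, by decide⟩, ⟨{3, 4}, by decide⟩]

theorem vV_bij : Function.Bijective vV := by
  have h1 : ∀ a b : Fin 10, (vV a).1 = (vV b).1 → a = b := by decide +kernel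
  have h2 : ∀ s : Finset (Fin 5), s.card = 2 → ∃ a, (vV a).1 = s := by decide +kernel
  refine ⟨fun a b h => h1 a b (congrArg Subtype.val h), fun s => ?_⟩
  obtain ⟨a, ha⟩ := h2 s.1 s.2
  exact ⟨a, Subtype.ext ha⟩

theorem adj_ok : ∀ e : Fin 15, Disjoint (vV (S e)).1 (vV (T e)).1 ∧
    pkey (vV (S e)).1 < pkey (vV (T e)).1 := by decide +kernel

def eE (e : Fin 15) : petersen.E := ⟨(vV (S e), vV (T e)), adj_ok e⟩

theorem eE_bij : Function.Bijective eE := by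
  have h1 : ∀ a b : Fin 15, S a = S b → T a = T b → a = b := by decide +kernel
  have h2 : ∀ i j : Fin 10, Disjoint (vV i).1 (vV j).1 → pkey (vV i).1 < pkey (vV j).1 →
      ∃ e, S e = i ∧ T e = j := by decide +kernel
  constructor
  · intro a b h
    have h' : (vV (S a), vV (T a)) = (vV (S b), vV (T b)) := congrArg Subtype.val h
    exact h1 a b (vV_bij.1 (congrArg Prod.fst h')) (vV_bij.1 (congrArg Prod.snd h'))
  · rintro ⟨⟨x, y⟩, hd, hk⟩
    obtain ⟨i, rfl⟩ := vV_bij.2 x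
    obtain ⟨j, rfl⟩ := vV_bij.2 y
    obtain ⟨e, rfl, rfl⟩ := h2 i j hd hk
    exact ⟨e, rfl⟩

def c (v : Fin 10) (e : Fin 15) : ℤ := (if S e = v then 1 else 0) - (if T e = v then 1 else 0)

theorem isFlow_iff {M : Type*} [AddCommGroup M] (G : Multigraph) (g : G.E → M) :
    G.IsFlow g ↔ ∀ v, ∑ e, ((if G.src e = v then (1:ℤ) else 0) - (if G.tgt e = v then 1 else 0)) • g e
      = 0 := by
  unfold Multigraph.IsFlow
  refine forall_congr' fun v => ?_
  simp only [sub_smul, ite_smul, one_smul, zero_smul, Finset.sum_sub_distrib, sub_eq_zero,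
    Finset.sum_filter]

theorem pet_flow {M : Type*} [AddCommGroup M] (g : petersen.E → M) :
    petersen.IsFlow g ↔ ∀ v, ∑ e, c v e • g (eE e) = 0 := by
  rw [isFlow_iff, vV_bij.2.forall]
  refine forall_congr' fun v => ?_
  rw [← (Equiv.ofBijective eE eE_bij).sum_comp]
  have key : ∀ e, ((if petersen.src (eE e) = vV v then (1:ℤ) else 0) -
      (if petersen.tgt (eE e) = vV v then 1 else 0)) = c v e := by
    intro e
    have h1 : petersen.src (eE e) = vV v ↔ S e = v := vV_bij.1.eq_iff
    have h2 : petersen.tgt (eE e) = vV v ↔ T e = v := vV_bij.1.eq_iff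
    simp only [h1, h2, c]
  simp only [Equiv.ofBijective_apply, key]

theorem add_del_flow {M : Type*} [AddCommGroup M] (G : Multigraph) (e₀ : G.E)
    (h : Option {e : G.E // e ≠ e₀} → M) (g : G.E → M) (h0 : h none = g e₀)
    (h1 : ∀ e, h (some e) = g e.1) :
    ((G.deleteEdge e₀).addEdge (G.src e₀) (G.tgt e₀)).IsFlow h ↔ G.IsFlow g := by
  refine (isFlow_iff ((G.deleteEdge e₀).addEdge (G.src e₀) (G.tgt e₀)) h).trans (Iff.trans ?_ (isFlow_iff G g).symm)
  refine forall_congr' fun v => ?_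
  refine Eq.congr ?_ rfl
  refine Fintype.sum_equiv (Equiv.optionSubtypeNe e₀) _ _ ?_
  intro e
  cases e with
  | none =>
    rw [Equiv.optionSubtypeNe_none]
    exact congrArg₂ _ rfl h0
  | some e =>
    rw [Equiv.optionSubtypeNe_some]
    exact congrArg₂ _ rfl (h1 e)

/-- cut coefficient -/
def C (M : List (Fin 10)) (e : Fin 15) : ℤ := (M.map (fun v => c v e)).sum

theorem cut_sum (g : Fin 15 → ℝ) (n : Fin 10 → ℤ) (hn : ∀ v, ∑ e, (c v e : ℝ) * g e = 5 * n v)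
    (M : List (Fin 10)) : ∑ e, (C M e : ℝ) * g e = 5 * ((M.map n).sum : ℤ) := by
  induction M with
  | nil => simp [C]
  | cons v M ih =>
    have : ∀ e, C (v :: M) e = c v e + C M e := fun e => by simp [C]
    simp only [this, Int.cast_add, add_mul, Finset.sum_add_distrib, ih, hn, List.map_cons,
      List.sum_cons]
    ring

def lo (M : List (Fin 10)) : ℤ := ∑ e, min (4 * C M e) (C M e)
def hi (M : List (Fin 10)) : ℤ := ∑ e, max (4 * C M e) (C M e)

theorem pt_le (x : ℝ) (z : ℤ) (h1 : 1 ≤ x) (h4 : x ≤ 4) :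
    ((min (4 * z) z : ℤ) : ℝ) ≤ z * x ∧ z * x ≤ ((max (4 * z) z : ℤ) : ℝ) := by
  push_cast
  rcases le_total (0:ℝ) z with h | h
  · exact ⟨(min_le_right _ _).trans (by nlinarith), le_trans (by nlinarith) (le_max_left _ _)⟩
  · exact ⟨(min_le_left _ _).trans (by nlinarith), le_trans (by nlinarith) (le_max_right _ _)⟩

theorem pt_lt (x : ℝ) (z : ℤ) (hz : z ≠ 0) (h1 : 1 < x) (h4 : x < 4) :
    ((min (4 * z) z : ℤ) : ℝ) < z * x ∧ z * x < ((max (4 * z) z : ℤ) : ℝ) := by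
  push_cast
  have hz' : (z:ℝ) ≠ 0 := by exact_mod_cast hz
  rcases lt_or_gt_of_ne hz' with h | h
  · exact ⟨(min_le_left _ _).trans_lt (by nlinarith), lt_of_lt_of_le (by nlinarith) (le_max_right _ _)⟩
  · exact ⟨(min_le_right _ _).trans_lt (by nlinarith), lt_of_lt_of_le (by nlinarith) (le_max_left _ _)⟩

theorem cut_bound (k : Fin 15) (g : Fin 15 → ℝ) (n : Fin 10 → ℤ)
    (hn : ∀ v, ∑ e, (c v e : ℝ) * g e = 5 * n v)
    (hg : ∀ e, e ≠ k → 1 < g e ∧ g e < 4) (hk : 1 ≤ g k ∧ g k ≤ 4)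
    (M : List (Fin 10)) (hM : ∃ e, e ≠ k ∧ C M e ≠ 0) :
    lo M < 5 * (M.map n).sum ∧ 5 * (M.map n).sum < hi M := by
  have hg' : ∀ e, 1 ≤ g e ∧ g e ≤ 4 := fun e => by
    by_cases h : e = k
    · rw [h]; exact hk
    · exact ⟨(hg e h).1.le, (hg e h).2.le⟩
  obtain ⟨e, he, hC⟩ := hM
  have hs := cut_sum g n hn M
  have a1 : ((lo M : ℤ) : ℝ) < ∑ e, (C M e : ℝ) * g e := by
    unfold lo
    rw [Int.cast_sum]
    exact Finset.sum_lt_sum (fun i _ => (pt_le _ _ (hg' i).1 (hg' i).2).1)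
      ⟨e, Finset.mem_univ _, (pt_lt _ _ hC (hg e he).1 (hg e he).2).1⟩
  have a2 : ∑ e, (C M e : ℝ) * g e < ((hi M : ℤ) : ℝ) := by
    unfold hi
    rw [Int.cast_sum]
    exact Finset.sum_lt_sum (fun i _ => (pt_le _ _ (hg' i).1 (hg' i).2).2)
      ⟨e, Finset.mem_univ _, (pt_lt _ _ hC (hg e he).1 (hg e he).2).2⟩
  rw [hs] at a1 a2
  exact ⟨by exact_mod_cast a1, by exact_mod_cast a2⟩

def base : Fin 10 → ℤ := ![1, 1, 1, 0, 0, 0, -2, -2, -2, -2]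

def tbl : List (List (Fin 10) × ℕ × ℕ) := [([2, 3, 5, 6, 7], 2, 3),
  ([1, 4, 5, 6, 7], 2, 3),
  ([2, 3, 4, 6, 8], 2, 3),
  ([0, 4, 5, 6, 8], 2, 3),
  ([3, 7, 8], 1, 2),
  ([2, 6, 9], 1, 2),
  ([1, 4, 6], 1, 2),
  ([0, 5, 6], 1, 2),
  ([2, 3, 6], 1, 2),
  ([2, 4, 6], 1, 2),
  ([2, 5, 6], 1, 2),
  ([4, 5, 6], 1, 2),
  ([1, 3, 7], 1, 2),
  ([2, 3, 7], 1, 2),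
  ([1, 4, 7], 1, 2),
  ([0, 5, 7], 1, 2),
  ([1, 5, 7], 1, 2),
  ([3, 5, 7], 1, 2),
  ([5, 6, 7], 1, 2),
  ([0, 3, 8], 1, 2),
  ([2, 3, 8], 1, 2),
  ([0, 4, 8], 1, 2),
  ([1, 4, 8], 1, 2),
  ([3, 4, 8], 1, 2),
  ([0, 5, 8], 1, 2),
  ([4, 6, 8], 1, 2),
  ([0, 1, 9], 1, 2),
  ([0, 2, 9], 1, 2),
  ([1, 2, 9], 1, 2),
  ([2, 3, 9], 1, 2),
  ([1, 4, 9], 1, 2),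
  ([0, 5, 9], 1, 2),
  ([1, 7, 9], 1, 2),
  ([0, 8, 9], 1, 2)]

theorem tbl_ok : ∀ p ∈ tbl, (5 * ((p.1.map base).sum + p.2.1 - 1) ≤ lo p.1 ∧
    hi p.1 ≤ 5 * ((p.1.map base).sum + p.2.2 + 1)) ∧ ∀ k, ∃ e, e ≠ k ∧ C p.1 e ≠ 0 := by
  decide +kernel

theorem single_ok : ∀ v, (5 * (base v - 1) ≤ lo [v] ∧
    hi [v] ≤ 5 * (base v + 2)) ∧ ∀ k, ∃ e, e ≠ k ∧ C [v] e ≠ 0 := by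
  decide +kernel

theorem all_ok : (∀ e, C (List.finRange 10) e = 0) ∧ ((List.finRange 10).map base).sum = -5 := by
  decide +kernel

def bad (b : Fin 10 → ℕ) : Bool :=
  !(((List.finRange 10).map b).sum == 5 &&
    tbl.all (fun p => Nat.ble p.2.1 (p.1.map b).sum && Nat.ble (p.1.map b).sum p.2.2))

theorem all_bad : ∀ b0 b1 b2 b3 b4 b5 b6 b7 b8 b9 : Bool,
    bad ![b0.toNat, b1.toNat, b2.toNat, b3.toNat, b4.toNat, b5.toNat, b6.toNat, b7.toNat,
      b8.toNat, b9.toNat] = true := by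
  decide +kernel

theorem no_flow (k : Fin 15) (g : Fin 15 → ℝ) (n : Fin 10 → ℤ)
    (hn : ∀ v, ∑ e, (c v e : ℝ) * g e = 5 * n v)
    (hg : ∀ e, e ≠ k → 1 < g e ∧ g e < 4) (hk : 1 ≤ g k ∧ g k ≤ 4) : False := by
  have hb : ∀ v, ∃ b : Bool, n v = base v + b.toNat := by
    intro v
    have h1 := cut_bound k g n hn hg hk [v] ((single_ok v).2 k)
    have h2 := (single_ok v).1
    simp only [List.map_cons, List.map_nil, List.sum_cons, List.sum_nil, add_zero] at h1
    have : n v = base v ∨ n v = base v + 1 := by omega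
    rcases this with h | h
    · exact ⟨false, by simp [h]⟩
    · exact ⟨true, by simp [h]⟩
  choose b hb using hb
  have hsum : ∀ M : List (Fin 10), (M.map n).sum
      = (M.map base).sum + ((M.map (fun v => (b v).toNat)).sum : ℕ) := by
    intro M
    induction M with
    | nil => simp
    | cons v M ih => simp only [List.map_cons, List.sum_cons, ih, hb]; push_cast; ring
  have hB := all_bad (b 0) (b 1) (b 2) (b 3) (b 4) (b 5) (b 6) (b 7) (b 8) (b 9)
  have hE : ![(b 0).toNat, (b 1).toNat, (b 2).toNat, (b 3).toNat, (b 4).toNat, (b 5).toNat,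
      (b 6).toNat, (b 7).toNat, (b 8).toNat, (b 9).toNat] = fun v => (b v).toNat := by
    funext v; fin_cases v <;> rfl
  rw [hE] at hB
  have hG : bad (fun v => (b v).toNat) = false := by
    unfold bad
    rw [Bool.not_eq_false', Bool.and_eq_true, beq_iff_eq, List.all_eq_true]
    constructor
    · have h := cut_sum g n hn (List.finRange 10)
      simp only [all_ok.1, Int.cast_zero, zero_mul, Finset.sum_const_zero] at h
      have h' : ((List.finRange 10).map n).sum = 0 := by
        have : (((((List.finRange 10).map n).sum : ℤ)) : ℝ) = 0 := by linarith
        exact_mod_cast this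
      rw [hsum, all_ok.2] at h'
      omega
    · intro p hp
      have h1 := tbl_ok p hp
      have h2 := cut_bound k g n hn hg hk p.1 (h1.2 k)
      rw [hsum] at h2
      have h3 := h1.1
      rw [Bool.and_eq_true, Nat.ble_eq, Nat.ble_eq]
      omega
  rw [hG] at hB
  exact Bool.false_ne_true hB

def tA : Fin 15 → Fin 15 → ℤ := ![![0, 1, 3, 1, 1, 2, 2, 3, 3, 1, 1, 3, 2, 2, 2],
  ![1, 0, 3, 1, 1, 2, 2, 3, 3, 1, 1, 2, 3, 3, 2],
  ![1, 3, 0, 1, 1, 2, 3, 3, 2, 1, 2, 2, 3, 3, 2],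
  ![1, 1, 2, 0, 1, 3, 2, 3, 3, 1, 1, 2, 2, 3, 2],
  ![1, 1, 2, 1, 0, 3, 2, 3, 3, 1, 1, 3, 2, 2, 3],
  ![1, 1, 2, 2, 2, 0, 1, 1, 2, 3, 2, 1, 1, 2, 3],
  ![1, 1, 2, 1, 2, 1, 0, 3, 1, 3, 1, 3, 2, 2, 3],
  ![1, 1, 2, 2, 3, 3, 1, 0, 3, 3, 2, 1, 1, 3, 2],
  ![1, 1, 2, 1, 1, 2, 2, 2, 0, 1, 1, 3, 2, 3, 2],
  ![1, 1, 2, 1, 2, 1, 1, 2, 1, 0, 1, 3, 2, 3, 2],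
  ![1, 1, 2, 2, 1, 1, 1, 2, 1, 1, 0, 3, 3, 3, 2],
  ![1, 1, 2, 1, 2, 1, 1, 2, 1, 3, 2, 0, 1, 2, 3],
  ![1, 1, 2, 1, 2, 1, 2, 1, 1, 3, 3, 1, 0, 2, 3],
  ![1, 1, 2, 1, 2, 1, 2, 1, 1, 1, 1, 3, 2, 0, 1],
  ![1, 1, 2, 2, 1, 1, 1, 2, 1, 3, 2, 1, 1, 1, 0]]

def tB : Fin 15 → Fin 15 → ℤ := ![![1, 1, 3, 1, 1, 3, 2, 4, 4, 1, 1, 3, 3, 3, 3],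
  ![1, 1, 3, 1, 1, 3, 2, 4, 4, 1, 1, 3, 3, 3, 3],
  ![1, 3, 1, 1, 2, 2, 4, 4, 2, 1, 3, 2, 4, 4, 2],
  ![1, 1, 3, 1, 1, 3, 2, 4, 4, 1, 1, 3, 3, 3, 3],
  ![1, 1, 3, 1, 1, 3, 2, 4, 4, 1, 1, 3, 3, 3, 3],
  ![1, 1, 3, 2, 2, 1, 2, 2, 1, 4, 3, 1, 1, 2, 4],
  ![1, 1, 3, 1, 3, 1, 1, 3, 1, 4, 2, 4, 2, 3, 3],
  ![1, 1, 3, 2, 4, 4, 1, 1, 3, 3, 3, 1, 1, 3, 3],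
  ![1, 1, 3, 2, 2, 1, 2, 2, 1, 1, 1, 4, 3, 4, 2],
  ![1, 1, 3, 2, 2, 1, 2, 2, 1, 1, 1, 4, 3, 4, 2],
  ![1, 1, 3, 2, 2, 1, 2, 2, 1, 1, 1, 4, 3, 4, 2],
  ![1, 1, 3, 2, 2, 1, 2, 2, 1, 4, 3, 1, 1, 2, 4],
  ![1, 1, 3, 2, 2, 1, 2, 2, 1, 4, 3, 1, 1, 2, 4],
  ![2, 1, 2, 1, 2, 2, 3, 1, 1, 2, 1, 3, 3, 1, 1],
  ![2, 1, 2, 2, 1, 2, 1, 3, 1, 3, 3, 1, 1, 1, 1]]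

theorem tab_flow : ∀ k v, 5 * ∑ e, c v e * tA k e = 4 * ∑ e, c v e * tB k e ∧
    5 ∣ ∑ e, c v e * tB k e := by decide +kernel

theorem tab_bd : ∀ k e, e ≠ k → 1 ≤ tA k e ∧ tA k e ≤ 3 ∧ 1 ≤ tB k e ∧ tB k e ≤ 4 := by
  decide +kernel

theorem tab_k : ∀ k, tA k k = 0 ∧ tB k k = 1 := by decide +kernel

theorem arc14 : openArc 5 1 (5 - 1) = (fun t : ℝ => (t : AddCircle (5:ℝ))) '' Set.Ioo 1 4 := by
  have h : Int.fract ((1 - (5 - 1)) / 5 : ℝ) = 2 / 5 := by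
    rw [Int.fract_eq_iff]; exact ⟨by norm_num, by norm_num, -1, by norm_num⟩
  unfold openArc
  rw [h]; norm_num

theorem arc41 : openArc 5 4 1 = (fun t : ℝ => (t : AddCircle (5:ℝ))) '' Set.Ioo 4 6 := by
  have h : Int.fract ((4 - 1) / 5 : ℝ) = 3 / 5 := by
    rw [Int.fract_eq_iff]; exact ⟨by norm_num, by norm_num, 0, by norm_num⟩
  unfold openArc
  rw [h]; norm_num

theorem coe5 (x : ℝ) (n : ℤ) : ((x + n * 5 : ℝ) : AddCircle (5:ℝ)) = x := by
  rw [AddCircle.coe_add, add_eq_left, AddCircle.coe_eq_zero_iff]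
  exact ⟨n, by simp⟩

theorem neg14 {x : AddCircle (5:ℝ)} (hx : x ∈ openArc 5 1 (5 - 1)) : -x ∈ openArc 5 1 (5 - 1) := by
  rw [arc14] at *
  obtain ⟨y, hy, rfl⟩ := hx
  refine ⟨5 - y, ⟨by linarith [hy.2], by linarith [hy.1]⟩, ?_⟩
  have := coe5 (-y) 1
  simp only [AddCircle.coe_neg] at this
  rw [← this]; congr 1; push_cast; ring

theorem neg41 {x : AddCircle (5:ℝ)} (hx : x ∈ openArc 5 4 1) : -x ∈ openArc 5 4 1 := by
  rw [arc41] at *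
  obtain ⟨y, hy, rfl⟩ := hx
  refine ⟨10 - y, ⟨by linarith [hy.2], by linarith [hy.1]⟩, ?_⟩
  have := coe5 (-y) 2
  simp only [AddCircle.coe_neg] at this
  rw [← this]; congr 1; push_cast; ring

theorem rep (x : AddCircle (5:ℝ)) (hx : x ∉ openArc 5 4 1) :
    ∃ y : ℝ, (y : AddCircle (5:ℝ)) = x ∧ 1 ≤ y ∧ y ≤ 4 := by
  rw [arc41] at hx
  induction x using QuotientAddGroup.induction_on with
  | H z =>
    have h5 : (0:ℝ) < 5 := by norm_num
    have hm := toIcoMod_mem_Ico h5 1 z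
    have hz : ((toIcoMod h5 1 z : ℝ) : AddCircle (5:ℝ)) = z := by
      have := coe5 (toIcoMod h5 1 z) (toIcoDiv h5 1 z)
      rw [← this]
      congr 1
      have := toIcoMod_add_toIcoDiv_zsmul h5 1 z
      simpa using this
    refine ⟨_, hz, hm.1, ?_⟩
    by_contra h
    exact hx ⟨_, ⟨not_le.1 h, by linarith [hm.2]⟩, hz⟩

theorem sum_coe (v : Fin 10) (g : Fin 15 → ℝ) :
    ∑ e, c v e • ((g e : ℝ) : AddCircle (5:ℝ)) = ((∑ e, (c v e : ℝ) * g e : ℝ) : AddCircle (5:ℝ)) := by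
  have : ∀ s : Finset (Fin 15), ∑ e ∈ s, c v e • ((g e : ℝ) : AddCircle (5:ℝ))
      = ((∑ e ∈ s, (c v e : ℝ) * g e : ℝ) : AddCircle (5:ℝ)) := by
    intro s
    induction s using Finset.induction_on with
    | empty => simp
    | insert a s ha ih =>
      rw [Finset.sum_insert ha, Finset.sum_insert ha, ih, AddCircle.coe_add, ← zsmul_eq_mul,
        AddCircle.coe_zsmul]
  exact this _

/-- nonexistence -/
theorem sub_dir (e₀ : petersen.E) (g : petersen.E → AddCircle (5:ℝ)) (hf : petersen.IsFlow g)
    (hg : ∀ e, e ≠ e₀ → g e ∈ openArc 5 1 (5 - 1)) : g e₀ ∈ openArc 5 4 1 := by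
  by_contra h0
  obtain ⟨k, rfl⟩ := eE_bij.2 e₀
  have hx : ∀ e, ∃ y : ℝ, (y : AddCircle (5:ℝ)) = g (eE e) ∧ (e ≠ k → 1 < y ∧ y < 4) ∧
      (1 ≤ y ∧ y ≤ 4) := by
    intro e
    by_cases h : e = k
    · subst h
      obtain ⟨y, h1, h2⟩ := rep _ h0
      exact ⟨y, h1, fun h => absurd rfl h, h2⟩
    · have := hg (eE e) (fun h' => h (eE_bij.1 h'))
      rw [arc14] at this
      obtain ⟨y, hy, h1⟩ := this
      exact ⟨y, h1, fun _ => hy, hy.1.le, hy.2.le⟩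
  choose y hy1 hy2 hy3 using hx
  rw [pet_flow] at hf
  have hn : ∀ v, ∃ n : ℤ, ∑ e, (c v e : ℝ) * y e = 5 * n := by
    intro v
    have := hf v
    simp only [← hy1] at this
    rw [sum_coe, AddCircle.coe_eq_zero_iff] at this
    obtain ⟨n, hn⟩ := this
    exact ⟨n, by rw [← hn, zsmul_eq_mul]; ring⟩
  choose n hn using hn
  exact no_flow k y n hn hy2 (hy3 k)

theorem flow_nonneg (k : Fin 15) (t : ℝ) (h0 : 0 ≤ t) (h1 : t < 1) :
    ∃ g : petersen.E → AddCircle (5:ℝ), petersen.IsFlow g ∧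
      (∀ e, e ≠ eE k → g e ∈ openArc 5 1 (5 - 1)) ∧ g (eE k) = (t : AddCircle (5:ℝ)) := by
  let r : Fin 15 → ℝ := fun e => (1 - t) * (5 / 4 * tA k e) + t * tB k e
  let φ := Equiv.ofBijective eE eE_bij
  have hφ : ∀ e, φ.symm (eE e) = e := fun e => φ.symm_apply_apply e
  refine ⟨fun e => (r (φ.symm e) : AddCircle (5:ℝ)), ?_, ?_, ?_⟩
  · rw [pet_flow]
    intro v
    simp only [hφ]
    rw [sum_coe, AddCircle.coe_eq_zero_iff]
    obtain ⟨ha, n, hb⟩ := tab_flow k v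
    refine ⟨n, ?_⟩
    have ha' : 5 * ∑ e, (c v e : ℝ) * tA k e = 4 * ∑ e, (c v e : ℝ) * tB k e := by exact_mod_cast ha
    have hb' : ∑ e, (c v e : ℝ) * tB k e = 5 * n := by exact_mod_cast hb
    have : ∑ e, (c v e : ℝ) * r e = (1 - t) * (5 / 4) * ∑ e, (c v e : ℝ) * tA k e
        + t * ∑ e, (c v e : ℝ) * tB k e := by
      rw [Finset.mul_sum, Finset.mul_sum, ← Finset.sum_add_distrib]
      exact Finset.sum_congr rfl fun e _ => by simp only [r]; ring
    rw [this, zsmul_eq_mul]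
    linear_combination (-(1 - t) / 4) * ha' - hb'
  · intro e he
    obtain ⟨e, rfl⟩ := eE_bij.2 e
    obtain ⟨a1, a2, b1, b2⟩ := tab_bd k e (fun h => he (by rw [h]))
    have a1' : (1:ℝ) ≤ tA k e := by exact_mod_cast a1
    have a2' : (tA k e : ℝ) ≤ 3 := by exact_mod_cast a2
    have b1' : (1:ℝ) ≤ tB k e := by exact_mod_cast b1
    have b2' : (tB k e : ℝ) ≤ 4 := by exact_mod_cast b2
    rw [arc14]
    refine ⟨r e, ⟨?_, ?_⟩, by simp only [hφ]⟩
    · simp only [r]; nlinarith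
    · simp only [r]; nlinarith
  · simp only [hφ, r, tab_k k]
    congr 1; push_cast; ring

theorem flow_ex (k : Fin 15) (x : AddCircle (5:ℝ)) (hx : x ∈ openArc 5 4 1) :
    ∃ g : petersen.E → AddCircle (5:ℝ), petersen.IsFlow g ∧
      (∀ e, e ≠ eE k → g e ∈ openArc 5 1 (5 - 1)) ∧ g (eE k) = x := by
  rw [arc41] at hx
  obtain ⟨y, hy, rfl⟩ := hx
  rcases le_total 5 y with h | h
  · obtain ⟨g, h1, h2, h3⟩ := flow_nonneg k (y - 5) (by linarith) (by linarith [hy.2])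
    refine ⟨g, h1, h2, h3.trans ?_⟩
    have := coe5 (y - 5) 1
    rw [← this]; congr 1; push_cast; ring
  · obtain ⟨g, h1, h2, h3⟩ := flow_nonneg k (5 - y) (by linarith) (by linarith [hy.1])
    refine ⟨fun e => - g e, ?_, fun e he => neg14 (h2 e he), ?_⟩
    · rw [pet_flow] at *
      intro v
      simp only [smul_neg, Finset.sum_neg_distrib, h1 v, neg_zero]
    · simp only [h3]
      rw [← AddCircle.coe_neg]
      have := coe5 (-(5 - y)) 1
      rw [← this]; congr 1; push_cast; ring

theorem sgn_mem {s : Set (AddCircle (5:ℝ))} (hs : ∀ x ∈ s, -x ∈ s) (u : ℤˣ)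
    {x : AddCircle (5:ℝ)} (hx : x ∈ s) : (u : ℤ) • x ∈ s := by
  rcases Int.units_eq_one_or u with rfl | rfl
  · simpa using hx
  · simpa using hs x hx

theorem sgn_mem' {s : Set (AddCircle (5:ℝ))} (hs : ∀ x ∈ s, -x ∈ s) (u : ℤˣ)
    {x : AddCircle (5:ℝ)} (hx : (u : ℤ) • x ∈ s) : x ∈ s := by
  rcases Int.units_eq_one_or u with rfl | rfl
  · simpa using hx
  · simpa using hs _ hx

end PetCap

/-- For any edge `uv` of the Petersen graph, the open
5-capacity of the g-edge `P*₁₀(u,v)` obtained by deleting that edge, with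
terminals `u` and `v`, equals the interval `(4,1)` of `ℝ/5ℤ`. -/
theorem petersen_minus_edge_capacity (e₀ : petersen.E) :
    CP 5 (petersen.deleteEdge e₀) (petersen.src e₀) (petersen.tgt e₀)
      = openArc 5 4 1 := by
  ext x
  constructor
  · rintro ⟨σ, f, hf, hc, rfl⟩
    let h : Option {e : petersen.E // e ≠ e₀} → AddCircle (5:ℝ) := fun e => ((σ e : ℤ)) • f e
    let g : petersen.E → AddCircle (5:ℝ) := fun e => h ((Equiv.optionSubtypeNe e₀).symm e)
    have g0 : h none = g e₀ := by simp [g]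
    have g1 : ∀ e, h (some e) = g e.1 := fun e => by simp [g, e.2]
    have hF := (PetCap.add_del_flow petersen e₀ h g g0 g1).1 hf
    refine PetCap.sgn_mem' (fun _ => PetCap.neg41) (σ none) ?_
    change h none ∈ _
    rw [g0]
    refine PetCap.sub_dir e₀ g hF fun e he => ?_
    rw [← g1 ⟨e, he⟩]
    exact PetCap.sgn_mem (fun _ => PetCap.neg14) _ (hc ⟨e, he⟩)
  · intro hx
    obtain ⟨k, rfl⟩ := PetCap.eE_bij.2 e₀
    obtain ⟨g, h1, h2, h3⟩ := PetCap.flow_ex k x hx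
    let h : Option {e : petersen.E // e ≠ PetCap.eE k} → AddCircle (5:ℝ) :=
      fun e => e.elim (g (PetCap.eE k)) (fun e => g e.1)
    refine ⟨fun _ => 1, h, ?_, fun e => h2 e.1 e.2, h3⟩
    unfold Multigraph.IsFlowOn
    refine (PetCap.add_del_flow petersen (PetCap.eE k) _ g ?_ ?_).2 h1
    · simp [h]
    · intro e; simp [h]
end

section
/- Let P*₁₀(u,v) be the g-edge obtained from the Petersen graph by deleting one edge uv. The set of values t ∈ ℝ/4ℤ for which there exists a modulo-4 flow f on P*₁₀(u,v) ∪ e₀ (where e₀ is a new edge joining u and v) with f(e) ∈ [1,3] ⊆ ℝ/4ℤ for every edge e of P*₁₀(u,v) and f(e₀) = t is exactly {0}. (That is, the closed 4-capacity of P*₁₀(u,v) is {0}.) -/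
open Finset


open Finset

/-- explicit list of the vertices -/
def pv : Fin 10 → petersen.V :=
  ![⟨{0, 1}, by decide⟩, ⟨{0, 2}, by decide⟩, ⟨{1, 2}, by decide⟩, ⟨{0, 3}, by decide⟩, ⟨{1, 3}, by decide⟩, ⟨{2, 3}, by decide⟩, ⟨{0, 4}, by decide⟩, ⟨{1, 4}, by decide⟩, ⟨{2, 4}, by decide⟩, ⟨{3, 4}, by decide⟩]

/-- explicit list of the edges -/
def pe : Fin 15 → petersen.E :=
  ![⟨(pv 0, pv 5), by decide⟩, ⟨(pv 0, pv 8), by decide⟩, ⟨(pv 0, pv 9), by decide⟩, ⟨(pv 1, pv 4), by decide⟩, ⟨(pv 1, pv 7), by decide⟩, ⟨(pv 1, pv 9), by decide⟩, ⟨(pv 2, pv 3), by decide⟩, ⟨(pv 2, pv 6), by decide⟩, ⟨(pv 2, pv 9), by decide⟩, ⟨(pv 3, pv 7), by decide⟩, ⟨(pv 3, pv 8), by decide⟩, ⟨(pv 4, pv 6), by decide⟩, ⟨(pv 4, pv 8), by decide⟩, ⟨(pv 5, pv 6), by decide⟩, ⟨(pv 5, pv 7), by decide⟩]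

/-- the paths with three vertices -/
def paths3 : List (Fin 10 × Fin 10 × Fin 10) :=
  [(5, 0, 8), (5, 0, 9), (8, 0, 9), (4, 1, 7), (4, 1, 9), (7, 1, 9), (3, 2, 6), (3, 2, 9), (6, 2, 9), (2, 3, 7), (2, 3, 8), (7, 3, 8), (1, 4, 6), (1, 4, 8), (6, 4, 8), (0, 5, 6), (0, 5, 7), (6, 5, 7), (2, 6, 4), (2, 6, 5), (4, 6, 5), (1, 7, 3), (1, 7, 5), (3, 7, 5), (0, 8, 3), (0, 8, 4), (3, 8, 4), (0, 9, 1), (0, 9, 2), (1, 9, 2)]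

/-- a nowhere-zero 4-flow of the graph without the `i`-th edge -/
def ftab : Fin 15 → Fin 15 → ℤ :=
  ![![0, 1, -1, 1, 1, -2, -1, -2, 3, 2, -3, -1, 2, 3, -3],
   ![1, 0, -1, 1, 1, -2, -1, -2, 3, 1, -2, -1, 2, 3, -2],
   ![1, -1, 0, 1, 1, -2, -1, -1, 2, 1, -2, -2, 3, 3, -2],
   ![1, 1, -2, 0, 1, -1, -1, -2, 3, 1, -2, -1, 1, 3, -2],
   ![1, 1, -2, 1, 0, -1, -1, -2, 3, 2, -3, -1, 2, 3, -2],
   ![1, 1, -2, 1, -1, 0, -1, -1, 2, 2, -3, -1, 2, 2, -1],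
   ![1, 1, -2, 1, -2, 1, 0, -1, 1, 3, -3, -1, 2, 2, -1],
   ![1, 1, -2, 2, -1, -1, -3, 0, 3, -1, -2, 1, 1, -1, 2],
   ![1, 1, -2, 1, -3, 2, 2, -2, 0, 1, 1, 3, -2, -1, 2],
   ![1, 1, -2, 1, -2, 1, 1, -2, 1, 0, 1, 3, -2, -1, 2],
   ![1, 1, -2, 2, -1, -1, -1, -2, 3, -1, 0, 3, -1, -1, 2],
   ![1, 1, -2, 1, -2, 1, 1, -2, 1, 3, -2, 0, 1, 2, -1],
   ![1, 1, -2, 1, -2, 1, 2, -3, 1, 3, -1, 1, 0, 2, -1],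
   ![1, 1, -2, 1, -2, 1, 2, -3, 1, 1, 1, 3, -2, 0, 1],
   ![1, 1, -2, 2, -1, -1, -1, -2, 3, 1, -2, 1, 1, 1, 0]]

instance : DecidableEq petersen.V := petersen.decV
instance : DecidableEq petersen.E := petersen.decE

theorem pv_bij : Function.Bijective pv := by
  constructor
  · unfold Function.Injective; decide +kernel
  · unfold Function.Surjective; decide +kernel

theorem pe_bij : Function.Bijective pe := by
  constructor
  · unfold Function.Injective; decide +kernel
  · unfold Function.Surjective; decide +kernel

theorem ftab_flow : ∀ i : Fin 15, ∀ k : Fin 10,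
    ∑ j : Fin 15, (if petersen.src (pe j) = pv k then ftab i j else 0) =
    ∑ j : Fin 15, (if petersen.tgt (pe j) = pv k then ftab i j else 0) := by
  decide +kernel

theorem ftab_range : ∀ i j : Fin 15, (i = j → ftab i j = 0) ∧
    (i ≠ j → (1 ≤ ftab i j ∧ ftab i j ≤ 3) ∨ (1 ≤ - ftab i j ∧ - ftab i j ≤ 3)) := by
  decide +kernel

theorem deg3 : ∀ k : Fin 10,
    ∑ j : Fin 15, ((if petersen.src (pe j) = pv k then 1 else 0) +
      (if petersen.tgt (pe j) = pv k then 1 else 0) : ℤ) = 3 := by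
  decide +kernel

/-- indicator of crossing -/
def crossI (i j k : Fin 10) (e : Fin 15) : ℤ :=
  (if petersen.src (pe e) = pv i then 1 else 0) + (if petersen.src (pe e) = pv j then 1 else 0)
  + (if petersen.src (pe e) = pv k then 1 else 0)
  - (if petersen.tgt (pe e) = pv i then 1 else 0) - (if petersen.tgt (pe e) = pv j then 1 else 0)
  - (if petersen.tgt (pe e) = pv k then 1 else 0)

theorem cross_le : ∀ p ∈ paths3, ∑ e : Fin 15, |crossI p.1 p.2.1 p.2.2 e| ≤ 5 := by
  decide +kernel

theorem cross_le_one : ∀ p ∈ paths3, ∀ e, |crossI p.1 p.2.1 p.2.2 e| ≤ 1 := by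
  decide +kernel

theorem comb_bool : ∀ b0 b1 b2 b3 b4 b5 b6 b7 b8 b9 : Bool,
    ((![b0, b1, b2, b3, b4, b5, b6, b7, b8, b9] : Fin 10 → Bool) |> fun c =>
    (∑ i : Fin 10, (if c i then 1 else -1 : ℤ)) = 0 →
      ∃ p ∈ paths3, c p.1 = c p.2.1 ∧ c p.2.1 = c p.2.2) := by
  decide +kernel

theorem comb (c : Fin 10 → Bool) (h : (∑ i : Fin 10, (if c i then 1 else -1 : ℤ)) = 0) :
    ∃ p ∈ paths3, c p.1 = c p.2.1 ∧ c p.2.1 = c p.2.2 := by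
  have hc : c = ![c 0, c 1, c 2, c 3, c 4, c 5, c 6, c 7, c 8, c 9] := by
    funext i; fin_cases i <;> rfl
  have := comb_bool (c 0) (c 1) (c 2) (c 3) (c 4) (c 5) (c 6) (c 7) (c 8) (c 9)
  rw [← hc] at this
  exact this h

theorem mem_filt {α : Type*} {p : α → Prop} {inst : DecidablePred p} {s : Finset α} {a : α} :
    a ∈ Finset.filter p s ↔ a ∈ s ∧ p a := Finset.mem_filter

theorem isFlow_transfer (G : Multigraph) (e₀ : G.E) {M : Type*} [AddCommMonoid M]
    (F : Option {e : G.E // e ≠ e₀} → M) :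
    ((G.deleteEdge e₀).addEdge (G.src e₀) (G.tgt e₀)).IsFlow F ↔
      G.IsFlow (fun e => F ((Equiv.optionSubtypeNe e₀).symm e)) := by
  unfold Multigraph.IsFlow
  refine forall_congr' fun (v : G.V) => Iff.of_eq (congrArg₂ Eq ?_ ?_)
  · refine Finset.sum_equiv (Equiv.optionSubtypeNe e₀) ?_ ?_
    · rintro (_ | x)
      · refine (@mem_filt _ _ _ _ _).trans (Iff.trans ?_ (@mem_filt _ _ _ _ _).symm)
        exact ⟨fun h => ⟨Finset.mem_univ _, h.2⟩, fun h => ⟨Finset.mem_univ _, h.2⟩⟩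
      · refine (@mem_filt _ _ _ _ _).trans (Iff.trans ?_ (@mem_filt _ _ _ _ _).symm)
        exact ⟨fun h => ⟨Finset.mem_univ _, h.2⟩, fun h => ⟨Finset.mem_univ _, h.2⟩⟩
    · intro x _
      exact congrArg F ((Equiv.optionSubtypeNe e₀).symm_apply_apply x).symm
  · refine Finset.sum_equiv (Equiv.optionSubtypeNe e₀) ?_ ?_
    · rintro (_ | x)
      · refine (@mem_filt _ _ _ _ _).trans (Iff.trans ?_ (@mem_filt _ _ _ _ _).symm)
        exact ⟨fun h => ⟨Finset.mem_univ _, h.2⟩, fun h => ⟨Finset.mem_univ _, h.2⟩⟩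
      · refine (@mem_filt _ _ _ _ _).trans (Iff.trans ?_ (@mem_filt _ _ _ _ _).symm)
        exact ⟨fun h => ⟨Finset.mem_univ _, h.2⟩, fun h => ⟨Finset.mem_univ _, h.2⟩⟩
    · intro x _
      exact congrArg F ((Equiv.optionSubtypeNe e₀).symm_apply_apply x).symm

theorem pet_flow_iff {M : Type*} [AddCommMonoid M] (g : petersen.E → M) :
    petersen.IsFlow g ↔ ∀ k : Fin 10,
      ∑ j : Fin 15, (if petersen.src (pe j) = pv k then g (pe j) else 0) =
      ∑ j : Fin 15, (if petersen.tgt (pe j) = pv k then g (pe j) else 0) := by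
  unfold Multigraph.IsFlow
  rw [pv_bij.surjective.forall]
  refine forall_congr' fun v => ?_
  rw [Finset.sum_filter, Finset.sum_filter]
  rw [← pe_bij.sum_comp, ← pe_bij.sum_comp]

theorem closedArc_eq : closedArc 4 1 3 =
    (fun t : ℝ => (t : AddCircle (4:ℝ))) '' Set.Icc 1 3 := by
  unfold closedArc
  have : Int.fract (((3:ℝ) - 1) / 4) = 1 / 2 := by
    rw [Int.fract_eq_iff]; refine ⟨by norm_num, by norm_num, 0, by norm_num⟩
  rw [this]; norm_num

theorem arc_neg {x : AddCircle (4:ℝ)} (h : x ∈ closedArc 4 1 3) : -x ∈ closedArc 4 1 3 := by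
  rw [closedArc_eq] at h ⊢
  obtain ⟨t, ⟨h1, h2⟩, rfl⟩ := h
  refine ⟨4 - t, ⟨by linarith, by linarith⟩, ?_⟩
  have : ((4 : ℝ) : AddCircle (4:ℝ)) = 0 := AddCircle.coe_period 4
  simp [this]

theorem arc_unit (u : ℤˣ) {x : AddCircle (4:ℝ)} (h : x ∈ closedArc 4 1 3) :
    ((u : ℤ) • x) ∈ closedArc 4 1 3 := by
  rcases Int.units_eq_one_or u with rfl | rfl
  · simpa using h
  · simpa using arc_neg h

theorem unit_zero (u : ℤˣ) (x : AddCircle (4:ℝ)) (h : (u : ℤ) • x = 0) : x = 0 := by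
  rcases Int.units_eq_one_or u with rfl | rfl
  · simpa using h
  · simpa using h

/-- the real core: no suitable deviation vector -/
theorem core (i₀ : Fin 15) (y : Fin 15 → ℝ) (h1 : ∀ j, j ≠ i₀ → |y j| ≤ 1) (h0 : |y i₀| < 2)
    (hv : ∀ k : Fin 10, ∃ n : ℤ,
      ∑ j : Fin 15, (if petersen.src (pe j) = pv k then (2 + y j) else 0) -
      ∑ j : Fin 15, (if petersen.tgt (pe j) = pv k then (2 + y j) else 0) = 4 * n) : False := by
  -- weighted bound
  have bound : ∀ w : Fin 15 → ℤ, (∀ j, |w j| ≤ 1) →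
      |∑ j, (w j : ℝ) * y j| < (∑ j, |w j| : ℤ) + 1 := by
    intro w hw
    have hw' : ∀ j, |(w j : ℝ)| ≤ 1 := fun j => by exact_mod_cast hw j
    calc |∑ j, (w j : ℝ) * y j| ≤ ∑ j, |(w j : ℝ) * y j| := Finset.abs_sum_le_sum_abs _ _
      _ < ∑ j, (|(w j : ℝ)| + if j = i₀ then 1 else 0) := by
        apply Finset.sum_lt_sum
        · intro j _
          rw [abs_mul]
          have := abs_nonneg (w j : ℝ)
          have := hw' j
          split_ifs with hj
          · subst hj; nlinarith
          · nlinarith [h1 j hj]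
        · refine ⟨i₀, Finset.mem_univ _, ?_⟩
          rw [abs_mul]
          have := abs_nonneg (w i₀ : ℝ)
          have := hw' i₀
          simp only [if_true]
          nlinarith [abs_nonneg (y i₀)]
      _ = _ := by
        rw [Finset.sum_add_distrib]; simp
  set d : Fin 10 → Fin 15 → ℤ := fun k j =>
    (if petersen.src (pe j) = pv k then 1 else 0) - (if petersen.tgt (pe j) = pv k then 1 else 0)
    with hd
  have hdabs : ∀ k j, |d k j| = (if petersen.src (pe j) = pv k then 1 else 0) +
      (if petersen.tgt (pe j) = pv k then 1 else 0) := by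
    rw [hd]; decide +kernel
  have hdle : ∀ k j, |d k j| ≤ 1 := by
    rw [hd]; decide +kernel
  have hdsum : ∀ j, ∑ k, d k j = 0 := by
    rw [hd]; decide +kernel
  have hs : ∀ k, ∃ b : Bool, ∑ j, (d k j : ℝ) * y j = if b then 2 else -2 := by
    intro k
    obtain ⟨n, hn⟩ := hv k
    have e1 : ∑ j, (d k j : ℝ) * y j = 4 * n - 2 * (∑ j, d k j : ℤ) := by
      rw [← hn]
      push_cast
      rw [Finset.mul_sum, ← Finset.sum_sub_distrib, ← Finset.sum_sub_distrib]
      refine Finset.sum_congr rfl fun j _ => ?_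
      simp only [hd]
      push_cast
      split_ifs <;> ring
    have hb := bound (d k) (hdle k)
    have h3 : ∑ j, |d k j| = 3 := by
      simp only [hdabs]; exact deg3 k
    have hodd : ∃ m : ℤ, ∑ j, d k j = 2 * m + 1 := by
      refine ⟨1 - ∑ j, (if petersen.tgt (pe j) = pv k then 1 else 0), ?_⟩
      have := deg3 k
      rw [Finset.sum_add_distrib] at this
      simp only [hd]
      rw [Finset.sum_sub_distrib]
      linarith
    obtain ⟨m, hm⟩ := hodd
    rw [e1, h3, hm] at hb
    rw [e1, hm]
    have hb2 : |4 * n - 2 * (2 * m + 1)| < (3 + 1 : ℤ) := by exact_mod_cast hb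
    rw [abs_lt] at hb2
    have : n - m = 1 ∨ n - m = 0 := by omega
    rcases this with h | h
    · refine ⟨true, ?_⟩
      have : (n : ℝ) = m + 1 := by exact_mod_cast (by omega : n = m + 1)
      rw [this]; push_cast; norm_num; try ring
    · refine ⟨false, ?_⟩
      have : (n : ℝ) = m := by exact_mod_cast (by omega : n = m)
      rw [this]; push_cast; norm_num; try ring
  choose c hc using hs
  have htot : ∑ k, ∑ j, (d k j : ℝ) * y j = 0 := by
    rw [Finset.sum_comm]
    refine Finset.sum_eq_zero fun j _ => ?_
    rw [← Finset.sum_mul]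
    have : (∑ k, (d k j : ℝ)) = 0 := by exact_mod_cast hdsum j
    rw [this, zero_mul]
  have hz : (∑ i : Fin 10, (if c i then 1 else -1 : ℤ)) = 0 := by
    have : ((∑ i : Fin 10, (if c i then 1 else -1 : ℤ) : ℤ) : ℝ) * 2 = 0 := by
      rw [← htot]
      push_cast
      rw [Finset.sum_mul]
      refine Finset.sum_congr rfl fun k _ => ?_
      rw [hc k]; split_ifs <;> norm_num
    have : ((∑ i : Fin 10, (if c i then 1 else -1 : ℤ) : ℤ) : ℝ) = 0 := by linarith
    exact_mod_cast this
  obtain ⟨p, hp, e1, e2⟩ := comb c hz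
  have hb := bound (crossI p.1 p.2.1 p.2.2) (cross_le_one p hp)
  have h5 : ((∑ j, |crossI p.1 p.2.1 p.2.2 j| : ℤ) : ℝ) ≤ 5 := by exact_mod_cast cross_le p hp
  have hsum : ∑ j, (crossI p.1 p.2.1 p.2.2 j : ℝ) * y j =
      ∑ j, (d p.1 j : ℝ) * y j + ∑ j, (d p.2.1 j : ℝ) * y j + ∑ j, (d p.2.2 j : ℝ) * y j := by
    rw [← Finset.sum_add_distrib, ← Finset.sum_add_distrib]
    refine Finset.sum_congr rfl fun j _ => ?_
    simp only [hd, crossI]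
    push_cast
    ring
  rw [hsum, hc p.1, hc p.2.1, hc p.2.2, e1, e2, abs_lt] at hb
  obtain ⟨hb1, hb2⟩ := hb
  split_ifs at hb1 hb2 <;> linarith

theorem lift_half (x : AddCircle (4:ℝ)) (hx : x ≠ 0) :
    ∃ y : ℝ, |y| < 2 ∧ ((2 + y : ℝ) : AddCircle (4:ℝ)) = x := by
  have : Fact ((0:ℝ) < 4) := ⟨by norm_num⟩
  obtain ⟨t, ⟨ht0, ht4⟩, rfl⟩ : ∃ t ∈ Set.Ico (0:ℝ) 4, (t : AddCircle (4:ℝ)) = x := by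
    have := AddCircle.coe_image_Ico_eq (4:ℝ) 0
    have hx' : x ∈ (Set.univ : Set (AddCircle (4:ℝ))) := trivial
    rw [← this] at hx'
    simpa using hx'
  have : t ≠ 0 := by rintro rfl; exact hx (by simp)
  have : 0 < t := lt_of_le_of_ne ht0 (Ne.symm this)
  refine ⟨t - 2, ?_, by ring_nf⟩
  rw [abs_lt]; constructor <;> linarith

theorem lift_arc (x : AddCircle (4:ℝ)) (hx : x ∈ closedArc 4 1 3) :
    ∃ y : ℝ, |y| ≤ 1 ∧ ((2 + y : ℝ) : AddCircle (4:ℝ)) = x := by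
  rw [closedArc_eq] at hx
  obtain ⟨t, ⟨h1, h2⟩, rfl⟩ := hx
  refine ⟨t - 2, ?_, by simp⟩
  rw [abs_le]; constructor <;> linarith

theorem no_flow (i₀ : Fin 15) (g : petersen.E → AddCircle (4:ℝ)) (hg : petersen.IsFlow g)
    (h1 : ∀ j, j ≠ i₀ → g (pe j) ∈ closedArc 4 1 3) (h0 : g (pe i₀) ≠ 0) : False := by
  have : ∀ j, ∃ y : ℝ, (j ≠ i₀ → |y| ≤ 1) ∧ (j = i₀ → |y| < 2) ∧
      ((2 + y : ℝ) : AddCircle (4:ℝ)) = g (pe j) := by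
    intro j
    by_cases hj : j = i₀
    · obtain ⟨y, hy, e⟩ := lift_half (g (pe j)) (hj ▸ h0)
      exact ⟨y, fun h => absurd hj h, fun _ => hy, e⟩
    · obtain ⟨y, hy, e⟩ := lift_arc (g (pe j)) (h1 j hj)
      exact ⟨y, fun _ => hy, fun h => absurd h hj, e⟩
  choose y ha hb hy using this
  refine core i₀ y ha (hb i₀ rfl) fun k => ?_
  have hk := (pet_flow_iff g).1 hg k
  have hcoe : ((∑ j : Fin 15, (if petersen.src (pe j) = pv k then (2 + y j) else 0) -
      ∑ j : Fin 15, (if petersen.tgt (pe j) = pv k then (2 + y j) else 0) : ℝ) :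
      AddCircle (4:ℝ)) = 0 := by
    have hom : ∀ F : Fin 15 → ℝ, ((∑ j, F j : ℝ) : AddCircle (4:ℝ)) =
        ∑ j, ((F j : ℝ) : AddCircle (4:ℝ)) := fun F =>
      map_sum (QuotientAddGroup.mk' (AddSubgroup.zmultiples (4:ℝ))) F Finset.univ
    have hite : ∀ (q : Prop) [Decidable q] (r : ℝ),
        ((if q then r else 0 : ℝ) : AddCircle (4:ℝ)) = if q then (r : AddCircle (4:ℝ)) else 0 := by
      intro q _ r; split_ifs <;> simp
    rw [AddCircle.coe_sub, hom, hom, sub_eq_zero]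
    simp only [hite, hy]
    exact hk
  rw [AddCircle.coe_eq_zero_iff] at hcoe
  obtain ⟨n, hn⟩ := hcoe
  exact ⟨n, by rw [← hn]; simp [mul_comm]⟩

/-- The closed 4-capacity of the g-edge `P*₁₀(u,v)` obtained
from the Petersen graph by deleting one edge `uv` is exactly `{0}`: the values
`t ∈ ℝ/4ℤ` for which some modulo-4 flow on `P*₁₀(u,v) ∪ e₀` takes the value
`t` on the added edge `e₀ = uv` while all edges of `P*₁₀(u,v)` carry values in
`[1,3] ⊆ ℝ/4ℤ` form the set `{0}`. -/
theorem petersen_closed_4_capacity (e₀ : petersen.E) :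
    CPcap 4 (petersen.deleteEdge e₀) (fun _ => closedArc 4 1 3)
      (petersen.src e₀) (petersen.tgt e₀) = {0} := by
  obtain ⟨i₀, rfl⟩ := pe_bij.surjective e₀
  ext t
  simp only [Set.mem_singleton_iff]
  constructor
  · rintro ⟨σ, f, hf, hcap, rfl⟩
    by_contra ht
    have hf' := (isFlow_transfer petersen (pe i₀) _).1 hf
    refine no_flow i₀ _ hf' ?_ ?_
    · intro j hj
      have hne : pe j ≠ pe i₀ := fun h => hj (pe_bij.injective h)
      have e1 : (Equiv.optionSubtypeNe (pe i₀)).symm (pe j) = some ⟨pe j, hne⟩ := by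
        simp [hne]
      simp only [e1]
      exact arc_unit _ (hcap _)
    · simp only [Equiv.optionSubtypeNe_symm_self]
      intro h
      apply ht
      exact unit_zero _ _ h
  · rintro rfl
    -- integer flow
    obtain ⟨F, hF⟩ : ∃ F : petersen.E → ℤ, ∀ j, F (pe j) = ftab i₀ j :=
      ⟨fun e => ftab i₀ ((Equiv.ofBijective pe pe_bij).symm e), fun j => by
        exact congrArg (ftab i₀) ((Equiv.ofBijective pe pe_bij).symm_apply_apply j)⟩
    let g : petersen.E → AddCircle (4:ℝ) := fun e => ((F e : ℝ) : AddCircle (4:ℝ))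
    have hgf : petersen.IsFlow g := by
      rw [pet_flow_iff]
      intro k
      have hk := congrArg (fun z : ℤ => ((z : ℝ) : AddCircle (4:ℝ))) (ftab_flow i₀ k)
      have hom : ∀ F : Fin 15 → ℤ, (((∑ j, F j : ℤ) : ℝ) : AddCircle (4:ℝ)) =
          ∑ j, (((F j : ℤ) : ℝ) : AddCircle (4:ℝ)) := fun F => by
        push_cast
        exact map_sum (QuotientAddGroup.mk' (AddSubgroup.zmultiples (4:ℝ))) _ Finset.univ
      have hite : ∀ (q : Prop) [Decidable q] (r : ℤ),
          (((if q then r else 0 : ℤ) : ℝ) : AddCircle (4:ℝ)) =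
            if q then ((r : ℝ) : AddCircle (4:ℝ)) else 0 := by
        intro q _ r; split_ifs <;> simp
      simp only [hom, hite] at hk
      simp only [g, hF]
      exact hk
    refine ⟨fun _ => 1, fun x => g (Equiv.optionSubtypeNe (pe i₀) x), ?_, ?_, ?_⟩
    · refine (isFlow_transfer petersen (pe i₀) _).2 ?_
      have e2 : (fun e => (((1 : ℤˣ) : ℤ) • g (Equiv.optionSubtypeNe (pe i₀)
          ((Equiv.optionSubtypeNe (pe i₀)).symm e)))) = g := by
        funext e
        rw [Equiv.apply_symm_apply, Units.val_one, one_zsmul]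
      exact e2.symm ▸ hgf
    · rintro ⟨e, he⟩
      obtain ⟨j, rfl⟩ := pe_bij.surjective e
      have hij : i₀ ≠ j := fun h => he (by rw [h])
      have e1 : Equiv.optionSubtypeNe (pe i₀) (some ⟨pe j, he⟩) = pe j := by simp
      have key : g (pe j) ∈ closedArc 4 1 3 := by
        simp only [g, hF]
        rcases (ftab_range i₀ j).2 hij with ⟨a, b⟩ | ⟨a, b⟩
        · rw [closedArc_eq]
          exact ⟨(ftab i₀ j : ℝ), ⟨by exact_mod_cast a, by exact_mod_cast b⟩, rfl⟩
        · rw [← neg_neg (((ftab i₀ j : ℤ) : ℝ) : AddCircle (4:ℝ))]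
          apply arc_neg
          rw [closedArc_eq]
          refine ⟨((- ftab i₀ j : ℤ) : ℝ), ⟨by exact_mod_cast a, by exact_mod_cast b⟩, ?_⟩
          push_cast; simp
      have e3 : g (Equiv.optionSubtypeNe (pe i₀) (some ⟨pe j, he⟩)) ∈ closedArc 4 1 3 := by
        rw [e1]; exact key
      exact e3
    · have e1 : Equiv.optionSubtypeNe (pe i₀) none = pe i₀ := by simp
      show g (Equiv.optionSubtypeNe (pe i₀) none) = 0
      rw [e1]
      simp only [g, hF, (ftab_range i₀ i₀).1 rfl]
      simp
end

section
/- The circular flow number of the Petersen graph equals 5. -/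
open Finset


open Finset

/-- Cut inequality for circular flows. -/
theorem cut_ineq (G : Multigraph) (r : ℝ) (σ : G.E → ℤˣ) (f : G.E → ℝ)
    (hf : G.IsFlowOn σ f) (hb : ∀ e, f e ∈ Set.Icc (1:ℝ) (r - 1)) (X : Finset G.V) :
    r * |((∑ v ∈ X, (∑ e ∈ Finset.univ.filter (fun e => G.src e = v), (σ e : ℤ) -
      ∑ e ∈ Finset.univ.filter (fun e => G.tgt e = v), (σ e : ℤ)) : ℤ) : ℝ)| ≤
      (r - 2) * ((Finset.univ.filter
        (fun e => ¬ (G.src e ∈ X ↔ G.tgt e ∈ X))).card : ℝ) := by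
  have key : ∀ g : G.E → ℝ, ∑ v ∈ X, (∑ e ∈ Finset.univ.filter (fun e => G.src e = v), g e -
      ∑ e ∈ Finset.univ.filter (fun e => G.tgt e = v), g e) =
      ∑ e, g e * ((if G.src e ∈ X then 1 else 0) - (if G.tgt e ∈ X then 1 else 0)) := by
    intro g
    simp only [Finset.sum_sub_distrib, mul_sub, Finset.sum_filter]
    congr 1
    · rw [Finset.sum_comm]
      refine Finset.sum_congr rfl fun e _ => ?_
      rw [Finset.sum_ite_eq]; simp
    · rw [Finset.sum_comm]
      refine Finset.sum_congr rfl fun e _ => ?_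
      rw [Finset.sum_ite_eq]; simp
  have h1 := key (fun e => ((σ e : ℤ) • f e))
  have h0 : ∑ v ∈ X, (∑ e ∈ Finset.univ.filter (fun e => G.src e = v), ((σ e : ℤ) • f e) -
      ∑ e ∈ Finset.univ.filter (fun e => G.tgt e = v), ((σ e : ℤ) • f e)) = 0 :=
    Finset.sum_eq_zero fun v _ => sub_eq_zero.2 (hf v)
  rw [h0] at h1
  have h2 := key (fun e => ((σ e : ℤ) : ℝ))
  push_cast
  rw [h2]
  by_cases hE : Nonempty G.E
  · have hr : 2 ≤ r := by
      obtain ⟨e⟩ := hE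
      have := hb e
      linarith [this.1, this.2]
    rw [← abs_of_nonneg (by linarith : (0:ℝ) ≤ r), ← abs_mul, abs_of_nonneg (by linarith : (0:ℝ) ≤ r)]
    have h3 : r * ∑ e, ((σ e : ℤ) : ℝ) *
        ((if G.src e ∈ X then 1 else 0) - (if G.tgt e ∈ X then 1 else 0)) =
        ∑ e, ((σ e : ℤ) : ℝ) * (r - 2 * f e) *
        ((if G.src e ∈ X then 1 else 0) - (if G.tgt e ∈ X then 1 else 0)) := by
      have h4 : ∀ a b : ℝ, 0 = b → a = a - 2 * b := fun a b hb => by rw [← hb]; ring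
      refine (h4 _ _ h1).trans ?_
      rw [Finset.mul_sum, Finset.mul_sum, ← Finset.sum_sub_distrib]
      refine Finset.sum_congr rfl fun e _ => ?_
      simp only [zsmul_eq_mul]
      ring
    rw [h3]
    refine (Finset.abs_sum_le_sum_abs _ _).trans ?_
    rw [Finset.card_filter]
    push_cast
    rw [Finset.mul_sum]
    refine Finset.sum_le_sum fun e _ => ?_
    have hs : |((σ e : ℤ) : ℝ)| = 1 := by
      rcases Int.units_eq_one_or (σ e) with h | h <;> simp [h]
    have hh : |r - 2 * f e| ≤ r - 2 := by
      have := hb e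
      rw [abs_le]; constructor <;> linarith [this.1, this.2]
    rw [abs_mul, abs_mul, hs, one_mul]
    by_cases ha : G.src e ∈ X <;> by_cases hc : G.tgt e ∈ X <;> simp [ha, hc, hh]
  · have : IsEmpty G.E := not_nonempty_iff.1 hE
    simp

def pvtx : Fin 10 → petersen.V :=
  ![⟨{0, 1}, by decide⟩, ⟨{0, 2}, by decide⟩, ⟨{1, 2}, by decide⟩, ⟨{0, 3}, by decide⟩,
    ⟨{1, 3}, by decide⟩, ⟨{2, 3}, by decide⟩, ⟨{0, 4}, by decide⟩, ⟨{1, 4}, by decide⟩,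
    ⟨{2, 4}, by decide⟩, ⟨{3, 4}, by decide⟩]

theorem pvtx_inj : Function.Injective pvtx := by
  intro a b; revert a b; decide +kernel

/-- paths on three vertices and pentagons, as bit masks -/
def pmasks : List ℕ := [289, 545, 769, 146, 530, 642, 76, 524, 580, 140, 268, 392, 82, 274, 336,
  97, 161, 224, 84, 100, 112, 138, 162, 168, 265, 273, 280, 515, 517, 518, 787, 675, 781, 613,
  425, 369, 654, 598, 410, 242, 348, 236]

def pset (m : ℕ) : Finset (Fin 10) := Finset.univ.filter (fun i => m.testBit i = true)

def pcut (X : Finset petersen.V) : ℕ := (Finset.univ.filter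
        (fun e => ¬ (petersen.src e ∈ X ↔ petersen.tgt e ∈ X))).card

theorem pmask_cut : ∀ m ∈ pmasks, pcut ((pset m).image pvtx) = 5 := by
  decide +kernel

theorem pcut_univ : pcut ((pset 1023).image pvtx) = 0 := by
  decide +kernel

theorem pcut_single : ∀ i, pcut (({i} : Finset (Fin 10)).image pvtx) = 3 := by
  decide +kernel

theorem pcomb : ∀ b : Fin 10 → Bool, (∑ i ∈ pset 1023, (if b i then (1:ℤ) else -1)) ≠ 0 ∨
    ∃ m ∈ pmasks, 3 ≤ |∑ i ∈ pset m, (if b i then (1:ℤ) else -1)| := by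
  decide +kernel

theorem pdeg : ∀ v : petersen.V,
    ((Finset.univ.filter (fun e => petersen.src e = v)).card +
      (Finset.univ.filter (fun e => petersen.tgt e = v)).card) = 3 := by
  decide +kernel

theorem petersen_lower (r : ℝ) (h : petersen.HasCNZF r) : 5 ≤ r := by
  obtain ⟨σ, f, hf, hb⟩ := h
  have hr : 2 ≤ r := by
    have e : petersen.E := ⟨(⟨{0, 1}, by decide⟩, ⟨{2, 3}, by decide⟩), by decide⟩
    have := hb e
    linarith [this.1, this.2]
  by_contra hlt
  push Not at hlt
  obtain ⟨W, hW⟩ : ∃ W : petersen.V → ℤ, W = fun v =>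
    (∑ e ∈ Finset.univ.filter (fun e => petersen.src e = v), (σ e : ℤ) -
      ∑ e ∈ Finset.univ.filter (fun e => petersen.tgt e = v), (σ e : ℤ)) := ⟨_, rfl⟩
  have hcut : ∀ S : Finset (Fin 10), r * |((∑ i ∈ S, W (pvtx i) : ℤ) : ℝ)| ≤
      (r - 2) * (pcut (S.image pvtx) : ℝ) := by
    intro S
    have := cut_ineq petersen r σ f hf hb (S.image pvtx)
    rw [Finset.sum_image (fun a _ b _ hab => pvtx_inj hab)] at this
    rw [hW]
    exact this
  have hodd : ∀ v, Odd (W v) := by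
    intro v
    have ht : ∀ e, (σ e : ℤ) = 1 - 2 * (if σ e = 1 then 0 else 1) := by
      intro e
      rcases Int.units_eq_one_or (σ e) with h | h <;> simp [h]
    have hd := pdeg v
    rw [hW]
    simp only
    rw [Finset.sum_congr rfl fun e _ => ht e, Finset.sum_congr rfl fun e _ => ht e]
    simp only [Finset.sum_sub_distrib, ← Finset.mul_sum, Finset.sum_const, nsmul_eq_mul, mul_one]
    rw [Int.odd_iff]
    omega
  have hpm : ∀ i, W (pvtx i) = 1 ∨ W (pvtx i) = -1 := by
    intro i
    have h1 := hcut {i}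
    rw [pcut_single, Finset.sum_singleton] at h1
    have h2 : |W (pvtx i)| < 3 := by
      by_contra hc
      push Not at hc
      have : (3:ℝ) ≤ |((W (pvtx i) : ℤ) : ℝ)| := by exact_mod_cast hc
      push_cast at h1
      nlinarith
    rw [abs_lt] at h2
    obtain ⟨k, hk⟩ := hodd (pvtx i)
    omega
  have hbool : ∀ i, (if (decide (W (pvtx i) = 1)) then (1:ℤ) else -1) = W (pvtx i) := by
    intro i
    rcases hpm i with h | h <;> simp [h]
  have hc := pcomb (fun i => decide (W (pvtx i) = 1))
  simp only [hbool] at hc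
  rcases hc with hc | ⟨m, hm, hc⟩
  · have h1 := hcut (pset 1023)
    rw [pcut_univ] at h1
    have : (1:ℤ) ≤ |∑ i ∈ pset 1023, W (pvtx i)| := Int.one_le_abs hc
    have : (1:ℝ) ≤ |((∑ i ∈ pset 1023, W (pvtx i) : ℤ) : ℝ)| := by exact_mod_cast this
    rw [Nat.cast_zero] at h1
    nlinarith
  · have h1 := hcut (pset m)
    rw [pmask_cut m hm] at h1
    have : (3:ℝ) ≤ |((∑ i ∈ pset m, W (pvtx i) : ℤ) : ℝ)| := by exact_mod_cast hc
    rw [Nat.cast_ofNat] at h1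
    nlinarith

def pflow (e : petersen.E) : ℤ :=
  match pkey e.1.1.1, pkey e.1.2.1 with
  | 3, 24 => -2
  | 5, 24 => -2
  | 6, 9 => -1
  | 6, 17 => -3
  | 6, 24 => 4
  | 9, 18 => 2
  | 9, 20 => -3
  | 10, 17 => -1
  | 10, 20 => 2
  | 12, 17 => 4
  | 12, 18 => -3
  | _, _ => 1

theorem pflow_flow : ∀ v : petersen.V,
    ∑ e ∈ Finset.univ.filter (fun e => petersen.src e = v), pflow e =
    ∑ e ∈ Finset.univ.filter (fun e => petersen.tgt e = v), pflow e := by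
  decide +kernel

theorem pflow_bd : ∀ e : petersen.E, 1 ≤ |pflow e| ∧ |pflow e| ≤ 4 := by
  decide +kernel

theorem petersen_upper : petersen.HasCNZF 5 := by
  refine ⟨fun e => if pflow e < 0 then -1 else 1, fun e => ((|pflow e| : ℤ) : ℝ), ?_, ?_⟩
  · have h : (fun e : petersen.E => ((((if pflow e < 0 then -1 else 1 : ℤˣ)) : ℤ) •
        ((|pflow e| : ℤ) : ℝ))) = fun e => ((pflow e : ℤ) : ℝ) := by
      funext e
      split_ifs with h
      · simp [abs_of_neg h]
      · simp [abs_of_nonneg (not_lt.1 h)]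
    unfold Multigraph.IsFlowOn
    rw [h]
    intro v
    have := pflow_flow v
    beta_reduce
    exact_mod_cast this
  · intro e
    have := pflow_bd e
    constructor
    · beta_reduce
      exact_mod_cast this.1
    · have h : ((|pflow e| : ℤ) : ℝ) ≤ 4 := by exact_mod_cast this.2
      norm_num at h ⊢
      exact h

/-- The circular flow number of the Petersen graph equals
5. -/
theorem circFlowNumber_petersen : circFlowNumber petersen = ((5 : ℝ) : EReal) := by
  apply le_antisymm
  · exact sInf_le ⟨5, rfl, petersen_upper⟩
  · refine le_sInf ?_
    rintro x ⟨r, rfl, hr⟩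
    exact EReal.coe_le_coe_iff.2 (petersen_lower r hr)
end

section
/- For every rational r with 4 < r < 5, the open r-capacity of the g-edge P*₁₀(u,v), obtained from the Petersen graph by deleting one edge uv, equals the open interval (4, r−4) of ℝ/rℤ. -/
open Finset


open Finset

abbrev PV := {s : Finset (Fin 5) // s.card = 2}

def psrc (e : petersen.E) : PV := petersen.src e
def ptgt (e : petersen.E) : PV := petersen.tgt e

theorem pkey_ne : ∀ v w : PV, Disjoint v.1 w.1 → pkey v.1 ≠ pkey w.1 := by
  decide +kernel

theorem sum_petE {M : Type*} [AddCommGroup M] (F : PV → PV → M) :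
    ∑ e : petersen.E, F (petersen.src e) (petersen.tgt e) =
    ∑ a : PV, ∑ b : PV, if Disjoint a.1 b.1 ∧ pkey a.1 < pkey b.1 then F a b else 0 := by
  rw [← Fintype.sum_prod_type' (f := fun a b : PV =>
    if Disjoint a.1 b.1 ∧ pkey a.1 < pkey b.1 then F a b else 0), ← Finset.sum_filter]
  exact (Finset.sum_subtype (Finset.univ.filter (fun p : PV × PV =>
    Disjoint p.1.1 p.2.1 ∧ pkey p.1.1 < pkey p.2.1)) (by simp) (fun p => F p.1 p.2)).symm

theorem sum_opt {M : Type*} [AddCommGroup M] (e₀ : petersen.E)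
    (H : Option {e : petersen.E // e ≠ e₀} → M) (G : petersen.E → M)
    (hs : ∀ e, H (some e) = G e.1) (hn : H none = G e₀) :
    ∑ e, H e = ∑ e, G e := by
  rw [Fintype.sum_option, hn, Fintype.sum_eq_add_sum_subtype_ne G e₀]
  simp only [hs]

theorem isFlow_iff (G : Multigraph) {M : Type*} [AddCommMonoid M] (f : G.E → M) :
    G.IsFlow f ↔ ∀ v : G.V, (∑ e, if G.src e = v then f e else 0) =
      ∑ e, if G.tgt e = v then f e else 0 := by
  simp only [Multigraph.IsFlow, Finset.sum_filter]

theorem flow_iff {M : Type*} [AddCommGroup M] (e₀ : petersen.E)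
    (h : Option {e : petersen.E // e ≠ e₀} → M) (Φ : PV → PV → M)
    (anti : ∀ a b, Φ a b = - Φ b a)
    (hs : ∀ e : {e : petersen.E // e ≠ e₀}, h (some e) = Φ (petersen.src e.1) (petersen.tgt e.1))
    (hn : h none = Φ (petersen.src e₀) (petersen.tgt e₀)) :
    ((petersen.deleteEdge e₀).addEdge (petersen.src e₀) (petersen.tgt e₀)).IsFlow h ↔
    ∀ v : PV, ∑ w : PV, (if Disjoint v.1 w.1 then Φ v w else 0) = 0 := by
  refine Iff.trans (isFlow_iff _ _) ?_
  refine forall_congr' fun (v : PV) => ?_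
  have h1 := sum_opt e₀ (fun e => if @Eq PV (Option.elim e (petersen.src e₀) (fun e => petersen.src e.1)) v
      then h e else 0) (fun e => if @Eq PV (psrc e) v then Φ (petersen.src e) (petersen.tgt e) else 0)
      (by
        intro e
        change (if @Eq PV (psrc e.1) v then h (some e) else 0) = _
        rw [hs])
      (by
        change (if @Eq PV (psrc e₀) v then h none else 0) = _
        rw [hn])
  have h2 := sum_opt e₀ (fun e => if @Eq PV (Option.elim e (petersen.tgt e₀) (fun e => petersen.tgt e.1)) v
      then h e else 0) (fun e => if @Eq PV (ptgt e) v then Φ (petersen.src e) (petersen.tgt e) else 0)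
      (by
        intro e
        change (if @Eq PV (ptgt e.1) v then h (some e) else 0) = _
        rw [hs])
      (by
        change (if @Eq PV (ptgt e₀) v then h none else 0) = _
        rw [hn])
  have h3 := sum_petE (fun a b => if a = v then Φ a b else 0)
  have h4 := sum_petE (fun a b => if b = v then Φ a b else 0)
  have h5 : (∑ a : PV, ∑ b : PV, if Disjoint a.1 b.1 ∧ pkey a.1 < pkey b.1 then
      (if a = v then Φ a b else 0) else 0) =
      ∑ b : PV, if Disjoint v.1 b.1 ∧ pkey v.1 < pkey b.1 then Φ v b else 0 := by
    rw [Finset.sum_eq_single v]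
    · simp
    · intro a _ ha; simp [ha]
    · simp
  have h6 : (∑ a : PV, ∑ b : PV, if Disjoint a.1 b.1 ∧ pkey a.1 < pkey b.1 then
      (if b = v then Φ a b else 0) else 0) =
      ∑ a : PV, if Disjoint a.1 v.1 ∧ pkey a.1 < pkey v.1 then Φ a v else 0 := by
    refine Finset.sum_congr rfl fun a _ => ?_
    rw [Finset.sum_eq_single v]
    · simp
    · intro a _ ha; simp [ha]
    · simp
  have e1 := h1.trans (h3.trans h5)
  have e2 := h2.trans (h4.trans h6)
  have key : (∑ w : PV, (if Disjoint v.1 w.1 then Φ v w else 0)) =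
      (∑ b : PV, if Disjoint v.1 b.1 ∧ pkey v.1 < pkey b.1 then Φ v b else 0) -
      ∑ a : PV, if Disjoint a.1 v.1 ∧ pkey a.1 < pkey v.1 then Φ a v else 0 := by
    rw [← Finset.sum_sub_distrib]
    refine Finset.sum_congr rfl fun w _ => ?_
    by_cases hd : Disjoint v.1 w.1
    · have := pkey_ne v w hd
      rcases lt_or_gt_of_ne this with hl | hl
      · simp [hd, hl, hl.not_gt]
      · simp [hd, hd.symm, hl, hl.not_gt, anti v w]
    · have hd' : ¬ Disjoint w.1 v.1 := fun h => hd h.symm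
      simp [hd, hd']
  refine Iff.trans (Eq.congr e1 e2) ?_
  rw [key, sub_eq_zero]

def pstd : Fin 10 → Finset (Fin 5) :=
  ![{0,1},{2,3},{2,4},{3,4},{0,4},{1,4},{0,3},{1,3},{0,2},{1,2}]

def padj (i j : Fin 10) : Bool := decide (Disjoint (pstd i) (pstd j))

theorem exists_label (e₀ : petersen.E) : ∃ p : Fin 10 ≃ PV,
    (∀ i j, Disjoint (p i).1 (p j).1 ↔ padj i j = true) ∧
    p 0 = petersen.src e₀ ∧ p 1 = petersen.tgt e₀ := by
  obtain ⟨⟨⟨s, hs⟩, ⟨t, ht⟩⟩, hd, hk⟩ := e₀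
  obtain ⟨a, b, hab, rfl⟩ := Finset.card_eq_two.1 hs
  obtain ⟨c, d, hcd, rfl⟩ := Finset.card_eq_two.1 ht
  have hE : ∃ e, e ≠ a ∧ e ≠ b ∧ e ≠ c ∧ e ≠ d := by
    clear hd hk hab hcd hs ht
    revert a b c d; decide
  obtain ⟨e, ha, hb, hc, hd'⟩ := hE
  simp only [Finset.disjoint_insert_left, Finset.mem_insert, Finset.mem_singleton,
    Finset.disjoint_singleton_left, not_or] at hd
  obtain ⟨⟨hac, had⟩, hbc, hbd⟩ := hd
  have hinj : Function.Injective ![a, b, c, d, e] := by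
    intro i j hij
    fin_cases i <;> fin_cases j <;> simp_all [eq_comm]
  let π : Fin 5 ↪ Fin 5 := ⟨_, hinj⟩
  have hcard : ∀ i, (pstd i).card = 2 := by decide
  have hstd : Function.Injective pstd := by unfold Function.Injective; decide +kernel
  let q : Fin 10 → PV := fun i => ⟨(pstd i).map π, by rw [Finset.card_map, hcard]⟩
  have hq : Function.Injective q := by
    intro i j hij
    apply hstd
    have := congrArg Subtype.val hij
    exact Finset.map_injective π this
  have hb : Function.Bijective q :=
    (Fintype.bijective_iff_injective_and_card q).2 ⟨hq, by decide +kernel⟩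
  refine ⟨Equiv.ofBijective q hb, ?_, ?_, ?_⟩
  · intro i j
    simp only [Equiv.ofBijective_apply, q, Finset.disjoint_map, padj, decide_eq_true_eq]
  · apply Subtype.ext
    simp [q, pstd, π, petersen]
  · apply Subtype.ext
    simp [q, pstd, π, petersen]

theorem sum_label {M : Type*} [AddCommGroup M] (p : Fin 10 ≃ PV)
    (hp : ∀ i j, Disjoint (p i).1 (p j).1 ↔ padj i j = true) (Φ : PV → PV → M) (i : Fin 10) :
    ∑ w : PV, (if Disjoint (p i).1 w.1 then Φ (p i) w else 0) =
    ∑ j : Fin 10, if padj i j then Φ (p i) (p j) else 0 := by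
  rw [← Equiv.sum_comp p]
  simp only [hp]

theorem neg_image (r c d : ℝ) (n : ℤ) (h : c + d = n * r) (z : AddCircle r)
    (hz : z ∈ (fun t : ℝ => (t : AddCircle r)) '' Set.Ioo c d) :
    -z ∈ (fun t : ℝ => (t : AddCircle r)) '' Set.Ioo c d := by
  obtain ⟨x, ⟨h1, h2⟩, rfl⟩ := hz
  refine ⟨n * r - x, ⟨by linarith, by linarith⟩, ?_⟩
  have : ((n * r : ℝ) : AddCircle r) = 0 := by
    rw [AddCircle.coe_eq_zero_iff]; exact ⟨n, by simp⟩
  simp only [AddCircle.coe_sub, this, zero_sub]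

theorem arc1 (r : ℝ) (h4 : 4 < r) : openArc r 1 (r - 1) =
    (fun t : ℝ => (t : AddCircle r)) '' Set.Ioo 1 (r - 1) := by
  have : Int.fract ((1 - (r - 1)) / r) = 2 / r := by
    rw [Int.fract_eq_iff]
    refine ⟨by positivity, by rw [div_lt_one (by linarith)]; linarith, -1, ?_⟩
    field_simp; push_cast; ring
  unfold openArc
  rw [this]
  congr 2
  field_simp; ring

theorem arc2 (r : ℝ) (h4 : 4 < r) (h5 : r < 5) : openArc r 4 (r - 4) =
    (fun t : ℝ => (t : AddCircle r)) '' Set.Ioo 4 (2 * r - 4) := by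
  have : Int.fract ((4 - (r - 4)) / r) = (8 - r) / r := by
    rw [Int.fract_eq_iff]
    refine ⟨div_nonneg (by linarith) (by linarith),
      by rw [div_lt_one (by linarith)]; linarith, 0, ?_⟩
    field_simp; push_cast; ring
  unfold openArc
  rw [this]
  congr 2
  field_simp; ring

theorem signed_mem (r c d : ℝ) (n : ℤ) (h : c + d = n * r) (s : ℤˣ) (z : AddCircle r) :
    ((s : ℤ) • z) ∈ (fun t : ℝ => (t : AddCircle r)) '' Set.Ioo c d ↔
    z ∈ (fun t : ℝ => (t : AddCircle r)) '' Set.Ioo c d := by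
  rcases Int.units_eq_one_or s with rfl | rfl
  · simp only [Units.val_one, one_smul]
  · simp only [Units.val_neg, Units.val_one, neg_smul, one_smul]
    exact ⟨fun h' => by simpa only [neg_neg] using neg_image r c d n h _ h', neg_image r c d n h z⟩

def tK (i j : Fin 10) : ℤ := (![
  ![0,0,2,2,0,0,0,0,0,0],
  ![0,0,0,0,2,2,0,0,0,0],
  ![-2,0,0,0,0,0,1,1,0,0],
  ![-2,0,0,0,0,0,0,0,1,1],
  ![0,-2,0,0,0,0,0,1,0,1],
  ![0,-2,0,0,0,0,1,0,1,0],
  ![0,0,-1,0,0,-1,0,0,0,2],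
  ![0,0,-1,0,-1,0,0,0,2,0],
  ![0,0,0,-1,0,-1,0,-2,0,0],
  ![0,0,0,-1,-1,0,-2,0,0,0]] : Fin 10 → Fin 10 → ℤ) i j

def tJ (i j : Fin 10) : ℤ := (![
  ![0,4,-2,-2,0,0,0,0,0,0],
  ![-4,0,0,0,2,2,0,0,0,0],
  ![2,0,0,0,0,0,-1,-1,0,0],
  ![2,0,0,0,0,0,0,0,-1,-1],
  ![0,-2,0,0,0,0,0,1,0,1],
  ![0,-2,0,0,0,0,1,0,1,0],
  ![0,0,1,0,0,-1,0,0,0,0],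
  ![0,0,1,0,-1,0,0,0,0,0],
  ![0,0,0,1,0,-1,0,0,0,0],
  ![0,0,0,1,-1,0,0,0,0,0]] : Fin 10 → Fin 10 → ℤ) i j

theorem tK_anti : ∀ i j, tK i j = - tK j i := by decide +kernel
theorem tJ_anti : ∀ i j, tJ i j = - tJ j i := by decide +kernel
theorem tK_sum : ∀ i, (∑ j, if padj i j then tK i j else 0) = 4 * ((∑ j, if padj i j then tK i j else 0) / 4) := by
  decide +kernel
theorem tJ_sum : ∀ i, (∑ j, if padj i j then tJ i j else 0) = 0 := by decide +kernel
theorem t_edge : ∀ i j, padj i j = true → ¬ (i = 0 ∧ j = 1) → ¬ (i = 1 ∧ j = 0) →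
    (tK i j = 2 ∧ -2 ≤ tJ i j ∧ tJ i j ≤ 2) ∨ (tK i j = -2 ∧ -2 ≤ tJ i j ∧ tJ i j ≤ 2) ∨
    (tK i j = 1 ∧ -1 ≤ tJ i j ∧ tJ i j ≤ 1) ∨ (tK i j = -1 ∧ -1 ≤ tJ i j ∧ tJ i j ≤ 1) := by
  decide +kernel

theorem bd (J s : ℝ) (k B : ℝ) (hk : 0 ≤ k) (h1 : -k ≤ J) (h2 : J ≤ k) (h3 : -B < s) (h4 : s < B) :
    -(k * B) ≤ J * s ∧ J * s ≤ k * B := by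
  have : |J * s| ≤ k * B := by
    rw [abs_mul]
    exact mul_le_mul (abs_le.2 ⟨h1, h2⟩) (abs_lt.2 ⟨h3, h4⟩).le (abs_nonneg _) hk
  exact abs_le.1 this

theorem t_mem (r s : ℝ) (h4 : 4 < r) (h5 : r < 5) (hs : 4 - r < s) (hs' : s < r - 4)
    (i j : Fin 10) (hp : padj i j = true) (h1 : ¬ (i = 0 ∧ j = 1)) (h2 : ¬ (i = 1 ∧ j = 0)) :
    (((tK i j * r + tJ i j * s) / 4 : ℝ) : AddCircle r) ∈
      (fun t : ℝ => (t : AddCircle r)) '' Set.Ioo 1 (r - 1) := by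
  have strict : ∀ J : ℤ, -1 ≤ J → J ≤ 1 → 4 - r < J * s ∧ J * s < r - 4 := by
    intro J a b
    have : J = -1 ∨ J = 0 ∨ J = 1 := by omega
    rcases this with rfl | rfl | rfl <;> constructor <;> push_cast <;> linarith
  have wk : ∀ J : ℤ, -2 ≤ J → J ≤ 2 → 2 * (4 - r) ≤ J * s ∧ J * s ≤ 2 * (r - 4) := by
    intro J a b
    have a' : (-2 : ℝ) ≤ J := by exact_mod_cast a
    have b' : (J : ℝ) ≤ 2 := by exact_mod_cast b
    have := bd J s 2 (r - 4) (by norm_num) a' b' (by linarith) hs'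
    constructor <;> linarith [this.1, this.2]
  have shift : ∀ x : ℝ, ((x + r : ℝ) : AddCircle r) = x := by
    intro x; rw [AddCircle.coe_add, AddCircle.coe_period, add_zero]
  rcases t_edge i j hp h1 h2 with ⟨hK, a, b⟩ | ⟨hK, a, b⟩ | ⟨hK, a, b⟩ | ⟨hK, a, b⟩ <;> rw [hK]
  · obtain ⟨c, d⟩ := wk _ a b
    exact ⟨_, ⟨by push_cast; linarith, by push_cast; linarith⟩, rfl⟩
  · obtain ⟨c, d⟩ := wk _ a b
    exact ⟨_, ⟨by push_cast; linarith, by push_cast; linarith⟩, shift _⟩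
  · obtain ⟨c, d⟩ := strict _ a b
    exact ⟨_, ⟨by push_cast; linarith, by push_cast; linarith⟩, rfl⟩
  · obtain ⟨c, d⟩ := strict _ a b
    exact ⟨_, ⟨by push_cast; linarith, by push_cast; linarith⟩, shift _⟩

theorem backward (r : ℝ) (h4 : 4 < r) (h5 : r < 5) (e₀ : petersen.E) (s : ℝ)
    (hs : 4 - r < s) (hs' : s < r - 4) :
    (s : AddCircle r) ∈ CP r (petersen.deleteEdge e₀) (petersen.src e₀) (petersen.tgt e₀) := by
  obtain ⟨p, hp, p0, p1⟩ := exists_label e₀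
  let T : Fin 10 → Fin 10 → AddCircle r := fun i j => (((tK i j * r + tJ i j * s) / 4 : ℝ) : AddCircle r)
  let Φ : PV → PV → AddCircle r := fun v w => T (p.symm v) (p.symm w)
  have T01 : T 0 1 = s := by
    have a : tK 0 1 = 0 := rfl
    have b : tJ 0 1 = 4 := rfl
    simp only [T, a, b]; congr 1; push_cast; ring
  refine ⟨fun _ => 1, fun e => Option.elim e (T 0 1) (fun e : {e : petersen.E // e ≠ e₀} =>
    Φ (petersen.src e.1) (petersen.tgt e.1)), ?_, ?_, T01⟩
  · unfold Multigraph.IsFlowOn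
    refine (flow_iff e₀ _ Φ ?_ ?_ ?_).2 ?_
    · intro a b
      simp only [Φ, T]
      rw [tK_anti, tJ_anti, ← AddCircle.coe_neg]
      congr 1; push_cast; ring
    · intro e
      change ((1 : ℤˣ) : ℤ) • Φ (petersen.src e.1) (petersen.tgt e.1) = _
      rw [Units.val_one, one_smul]
    · change ((1 : ℤˣ) : ℤ) • T 0 1 = _
      rw [Units.val_one, one_smul, ← p0, ← p1]
      simp [Φ]
    · intro v
      obtain ⟨i, rfl⟩ := p.surjective v
      rw [sum_label p hp]
      have hk := congrArg (Int.cast : ℤ → ℝ) (tK_sum i)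
      have hj := congrArg (Int.cast : ℤ → ℝ) (tJ_sum i)
      have : (∑ j : Fin 10, if padj i j then Φ (p i) (p j) else 0) =
          ((∑ j : Fin 10, ((if padj i j then tK i j else 0 : ℤ) * r
            + (if padj i j then tJ i j else 0 : ℤ) * s) / 4 : ℝ) : AddCircle r) := by
        refine Eq.trans ?_ (map_sum (QuotientAddGroup.mk' (AddSubgroup.zmultiples r)) _ _).symm
        refine Finset.sum_congr rfl fun j _ => ?_
        by_cases h : padj i j = true
        · simp [h, Φ, T]
        · simp [h]
      rw [this, ← Finset.sum_div, Finset.sum_add_distrib, ← Finset.sum_mul, ← Finset.sum_mul,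
        ← Int.cast_sum, ← Int.cast_sum, hk, hj, AddCircle.coe_eq_zero_iff]
      refine ⟨(∑ j, if padj i j then tK i j else 0) / 4, ?_⟩
      simp only [zsmul_eq_mul]
      push_cast
      ring
  · intro e
    obtain ⟨⟨⟨v, w⟩, hd, hk⟩, he⟩ := (e : {e : petersen.E // e ≠ e₀})
    rw [arc1 r h4]
    obtain ⟨⟨v', w'⟩, hd', hk'⟩ := e₀
    change p 0 = v' at p0
    change p 1 = w' at p1
    subst p0 p1
    change T (p.symm v) (p.symm w) ∈ _
    obtain ⟨i, rfl⟩ := p.surjective v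
    obtain ⟨j, rfl⟩ := p.surjective w
    rw [Equiv.symm_apply_apply, Equiv.symm_apply_apply]
    refine t_mem r s h4 h5 hs hs' _ _ ((hp i j).1 hd) ?_ ?_
    · rintro ⟨rfl, rfl⟩
      exact he rfl
    · rintro ⟨rfl, rfl⟩
      exact absurd hk hk'.not_gt

theorem vertex_lem (r a b c : ℝ) (h4 : 4 < r) (h : ((a : AddCircle r) + b + c) = 0)
    (h1 : 0 < a + b + c) (h2 : a + b + c < 3 * r) :
    ∃ k : Bool, a + b + c = r + (k.toNat : ℝ) * r := by
  rw [← AddCircle.coe_add, ← AddCircle.coe_add, AddCircle.coe_eq_zero_iff] at h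
  obtain ⟨n, hn⟩ := h
  rw [zsmul_eq_mul] at hn
  have r0 : 0 < r := by linarith
  have n1 : 0 < n := by
    by_contra hh
    have : (n : ℝ) ≤ 0 := by exact_mod_cast not_lt.1 hh
    nlinarith
  have n2 : n < 3 := by
    by_contra hh
    have : (3 : ℝ) ≤ n := by exact_mod_cast not_lt.1 hh
    nlinarith
  have : n = 1 ∨ n = 2 := by omega
  rcases this with rfl | rfl
  · exact ⟨false, by simp [← hn]⟩
  · exact ⟨true, by simp [← hn]; ring⟩

set_option synthInstance.maxSize 4000 in
set_option synthInstance.maxHeartbeats 400000 in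
theorem no_bisection : ∀ b0 b1 b2 b3 b4 b5 b6 b7 b8 b9 : Bool,
    b0.toNat + b1.toNat + b2.toNat + b3.toNat + b4.toNat + b5.toNat + b6.toNat + b7.toNat + b8.toNat + b9.toNat = 5 →
    (b1 = b0 ∧ b0 = b2) ∨
    (b1 = b0 ∧ b0 = b3) ∨
    (b2 = b0 ∧ b0 = b3) ∨
    (b0 = b1 ∧ b1 = b4) ∨
    (b0 = b1 ∧ b1 = b5) ∨
    (b4 = b1 ∧ b1 = b5) ∨
    (b0 = b2 ∧ b2 = b6) ∨
    (b0 = b2 ∧ b2 = b7) ∨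
    (b6 = b2 ∧ b2 = b7) ∨
    (b0 = b3 ∧ b3 = b8) ∨
    (b0 = b3 ∧ b3 = b9) ∨
    (b8 = b3 ∧ b3 = b9) ∨
    (b1 = b4 ∧ b4 = b7) ∨
    (b1 = b4 ∧ b4 = b9) ∨
    (b7 = b4 ∧ b4 = b9) ∨
    (b1 = b5 ∧ b5 = b6) ∨
    (b1 = b5 ∧ b5 = b8) ∨
    (b6 = b5 ∧ b5 = b8) ∨
    (b2 = b6 ∧ b6 = b5) ∨
    (b2 = b6 ∧ b6 = b9) ∨
    (b5 = b6 ∧ b6 = b9) ∨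
    (b2 = b7 ∧ b7 = b4) ∨
    (b2 = b7 ∧ b7 = b8) ∨
    (b4 = b7 ∧ b7 = b8) ∨
    (b3 = b8 ∧ b8 = b5) ∨
    (b3 = b8 ∧ b8 = b7) ∨
    (b5 = b8 ∧ b8 = b7) ∨
    (b3 = b9 ∧ b9 = b4) ∨
    (b3 = b9 ∧ b9 = b6) ∨
    (b4 = b9 ∧ b9 = b6) := by
  decide +kernel

theorem core_s19 (r : ℝ) (h4 : 4 < r) (h5 : r < 5) (b0 b1 b2 b3 b4 b5 b6 b7 b8 b9 : Bool) (x01 x02 x03 x14 x15 x26 x27 x38 x39 x47 x49 x56 x58 x69 x78 : ℝ)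
    (l01 : r - 4 ≤ x01) (u01 : x01 ≤ 4)
    (l02 : 1 < x02) (u02 : x02 < r - 1)
    (l03 : 1 < x03) (u03 : x03 < r - 1)
    (l14 : 1 < x14) (u14 : x14 < r - 1)
    (l15 : 1 < x15) (u15 : x15 < r - 1)
    (l26 : 1 < x26) (u26 : x26 < r - 1)
    (l27 : 1 < x27) (u27 : x27 < r - 1)
    (l38 : 1 < x38) (u38 : x38 < r - 1)
    (l39 : 1 < x39) (u39 : x39 < r - 1)
    (l47 : 1 < x47) (u47 : x47 < r - 1)
    (l49 : 1 < x49) (u49 : x49 < r - 1)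
    (l56 : 1 < x56) (u56 : x56 < r - 1)
    (l58 : 1 < x58) (u58 : x58 < r - 1)
    (l69 : 1 < x69) (u69 : x69 < r - 1)
    (l78 : 1 < x78) (u78 : x78 < r - 1)
    (s0 : x01 + x02 + x03 = r + (b0.toNat : ℝ) * r)
    (s1 : (r - x01) + x14 + x15 = r + (b1.toNat : ℝ) * r)
    (s2 : (r - x02) + x26 + x27 = r + (b2.toNat : ℝ) * r)
    (s3 : (r - x03) + x38 + x39 = r + (b3.toNat : ℝ) * r)
    (s4 : (r - x14) + x47 + x49 = r + (b4.toNat : ℝ) * r)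
    (s5 : (r - x15) + x56 + x58 = r + (b5.toNat : ℝ) * r)
    (s6 : (r - x26) + (r - x56) + x69 = r + (b6.toNat : ℝ) * r)
    (s7 : (r - x27) + (r - x47) + x78 = r + (b7.toNat : ℝ) * r)
    (s8 : (r - x38) + (r - x58) + (r - x78) = r + (b8.toNat : ℝ) * r)
    (s9 : (r - x39) + (r - x49) + (r - x69) = r + (b9.toNat : ℝ) * r)
    : False := by
  have r0 : r ≠ 0 := by linarith
  have tot : b0.toNat + b1.toNat + b2.toNat + b3.toNat + b4.toNat + b5.toNat + b6.toNat + b7.toNat + b8.toNat + b9.toNat = 5 := by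
    have : ((b0.toNat + b1.toNat + b2.toNat + b3.toNat + b4.toNat + b5.toNat + b6.toNat + b7.toNat + b8.toNat + b9.toNat : ℕ) : ℝ) * r = 5 * r := by
      push_cast; linarith
    exact_mod_cast mul_right_cancel₀ r0 this
  have hb : ∀ b : Bool, (b.toNat : ℝ) * r = 0 ∨ (b.toNat : ℝ) * r = r := by
    intro b; cases b <;> simp
  rcases no_bisection _ _ _ _ _ _ _ _ _ _ tot with ⟨e, f⟩ | ⟨e, f⟩ | ⟨e, f⟩ | ⟨e, f⟩ | ⟨e, f⟩ | ⟨e, f⟩ | ⟨e, f⟩ | ⟨e, f⟩ | ⟨e, f⟩ | ⟨e, f⟩ | ⟨e, f⟩ | ⟨e, f⟩ | ⟨e, f⟩ | ⟨e, f⟩ | ⟨e, f⟩ | ⟨e, f⟩ | ⟨e, f⟩ | ⟨e, f⟩ | ⟨e, f⟩ | ⟨e, f⟩ | ⟨e, f⟩ | ⟨e, f⟩ | ⟨e, f⟩ | ⟨e, f⟩ | ⟨e, f⟩ | ⟨e, f⟩ | ⟨e, f⟩ | ⟨e, f⟩ | ⟨e, f⟩ | ⟨e, f⟩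
  · rw [e] at s1; rw [f] at s1 s0
    rcases hb b2 with m | m <;> rw [m] at s1 s0 s2 <;> linarith only [h4, h5, s1, s0, s2, l01, u01, l02, u02, l03, u03, l14, u14, l15, u15, l26, u26, l27, u27]
  · rw [e] at s1; rw [f] at s1 s0
    rcases hb b3 with m | m <;> rw [m] at s1 s0 s3 <;> linarith only [h4, h5, s1, s0, s3, l01, u01, l02, u02, l03, u03, l14, u14, l15, u15, l38, u38, l39, u39]
  · rw [e] at s2; rw [f] at s2 s0
    rcases hb b3 with m | m <;> rw [m] at s2 s0 s3 <;> linarith only [h4, h5, s2, s0, s3, l01, u01, l02, u02, l03, u03, l26, u26, l27, u27, l38, u38, l39, u39]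
  · rw [e] at s0; rw [f] at s0 s1
    rcases hb b4 with m | m <;> rw [m] at s0 s1 s4 <;> linarith only [h4, h5, s0, s1, s4, l01, u01, l02, u02, l03, u03, l14, u14, l15, u15, l47, u47, l49, u49]
  · rw [e] at s0; rw [f] at s0 s1
    rcases hb b5 with m | m <;> rw [m] at s0 s1 s5 <;> linarith only [h4, h5, s0, s1, s5, l01, u01, l02, u02, l03, u03, l14, u14, l15, u15, l56, u56, l58, u58]
  · rw [e] at s4; rw [f] at s4 s1
    rcases hb b5 with m | m <;> rw [m] at s4 s1 s5 <;> linarith only [h4, h5, s4, s1, s5, l01, u01, l14, u14, l15, u15, l47, u47, l49, u49, l56, u56, l58, u58]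
  · rw [e] at s0; rw [f] at s0 s2
    rcases hb b6 with m | m <;> rw [m] at s0 s2 s6 <;> linarith only [h4, h5, s0, s2, s6, l01, u01, l02, u02, l03, u03, l26, u26, l27, u27, l56, u56, l69, u69]
  · rw [e] at s0; rw [f] at s0 s2
    rcases hb b7 with m | m <;> rw [m] at s0 s2 s7 <;> linarith only [h4, h5, s0, s2, s7, l01, u01, l02, u02, l03, u03, l26, u26, l27, u27, l47, u47, l78, u78]
  · rw [e] at s6; rw [f] at s6 s2
    rcases hb b7 with m | m <;> rw [m] at s6 s2 s7 <;> linarith only [h4, h5, s6, s2, s7, l02, u02, l26, u26, l27, u27, l47, u47, l56, u56, l69, u69, l78, u78]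
  · rw [e] at s0; rw [f] at s0 s3
    rcases hb b8 with m | m <;> rw [m] at s0 s3 s8 <;> linarith only [h4, h5, s0, s3, s8, l01, u01, l02, u02, l03, u03, l38, u38, l39, u39, l58, u58, l78, u78]
  · rw [e] at s0; rw [f] at s0 s3
    rcases hb b9 with m | m <;> rw [m] at s0 s3 s9 <;> linarith only [h4, h5, s0, s3, s9, l01, u01, l02, u02, l03, u03, l38, u38, l39, u39, l49, u49, l69, u69]
  · rw [e] at s8; rw [f] at s8 s3
    rcases hb b9 with m | m <;> rw [m] at s8 s3 s9 <;> linarith only [h4, h5, s8, s3, s9, l03, u03, l38, u38, l39, u39, l49, u49, l58, u58, l69, u69, l78, u78]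
  · rw [e] at s1; rw [f] at s1 s4
    rcases hb b7 with m | m <;> rw [m] at s1 s4 s7 <;> linarith only [h4, h5, s1, s4, s7, l01, u01, l14, u14, l15, u15, l27, u27, l47, u47, l49, u49, l78, u78]
  · rw [e] at s1; rw [f] at s1 s4
    rcases hb b9 with m | m <;> rw [m] at s1 s4 s9 <;> linarith only [h4, h5, s1, s4, s9, l01, u01, l14, u14, l15, u15, l39, u39, l47, u47, l49, u49, l69, u69]
  · rw [e] at s7; rw [f] at s7 s4
    rcases hb b9 with m | m <;> rw [m] at s7 s4 s9 <;> linarith only [h4, h5, s7, s4, s9, l14, u14, l27, u27, l39, u39, l47, u47, l49, u49, l69, u69, l78, u78]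
  · rw [e] at s1; rw [f] at s1 s5
    rcases hb b6 with m | m <;> rw [m] at s1 s5 s6 <;> linarith only [h4, h5, s1, s5, s6, l01, u01, l14, u14, l15, u15, l26, u26, l56, u56, l58, u58, l69, u69]
  · rw [e] at s1; rw [f] at s1 s5
    rcases hb b8 with m | m <;> rw [m] at s1 s5 s8 <;> linarith only [h4, h5, s1, s5, s8, l01, u01, l14, u14, l15, u15, l38, u38, l56, u56, l58, u58, l78, u78]
  · rw [e] at s6; rw [f] at s6 s5
    rcases hb b8 with m | m <;> rw [m] at s6 s5 s8 <;> linarith only [h4, h5, s6, s5, s8, l15, u15, l26, u26, l38, u38, l56, u56, l58, u58, l69, u69, l78, u78]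
  · rw [e] at s2; rw [f] at s2 s6
    rcases hb b5 with m | m <;> rw [m] at s2 s6 s5 <;> linarith only [h4, h5, s2, s6, s5, l02, u02, l15, u15, l26, u26, l27, u27, l56, u56, l58, u58, l69, u69]
  · rw [e] at s2; rw [f] at s2 s6
    rcases hb b9 with m | m <;> rw [m] at s2 s6 s9 <;> linarith only [h4, h5, s2, s6, s9, l02, u02, l26, u26, l27, u27, l39, u39, l49, u49, l56, u56, l69, u69]
  · rw [e] at s5; rw [f] at s5 s6
    rcases hb b9 with m | m <;> rw [m] at s5 s6 s9 <;> linarith only [h4, h5, s5, s6, s9, l15, u15, l26, u26, l39, u39, l49, u49, l56, u56, l58, u58, l69, u69]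
  · rw [e] at s2; rw [f] at s2 s7
    rcases hb b4 with m | m <;> rw [m] at s2 s7 s4 <;> linarith only [h4, h5, s2, s7, s4, l02, u02, l14, u14, l26, u26, l27, u27, l47, u47, l49, u49, l78, u78]
  · rw [e] at s2; rw [f] at s2 s7
    rcases hb b8 with m | m <;> rw [m] at s2 s7 s8 <;> linarith only [h4, h5, s2, s7, s8, l02, u02, l26, u26, l27, u27, l38, u38, l47, u47, l58, u58, l78, u78]
  · rw [e] at s4; rw [f] at s4 s7
    rcases hb b8 with m | m <;> rw [m] at s4 s7 s8 <;> linarith only [h4, h5, s4, s7, s8, l14, u14, l27, u27, l38, u38, l47, u47, l49, u49, l58, u58, l78, u78]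
  · rw [e] at s3; rw [f] at s3 s8
    rcases hb b5 with m | m <;> rw [m] at s3 s8 s5 <;> linarith only [h4, h5, s3, s8, s5, l03, u03, l15, u15, l38, u38, l39, u39, l56, u56, l58, u58, l78, u78]
  · rw [e] at s3; rw [f] at s3 s8
    rcases hb b7 with m | m <;> rw [m] at s3 s8 s7 <;> linarith only [h4, h5, s3, s8, s7, l03, u03, l27, u27, l38, u38, l39, u39, l47, u47, l58, u58, l78, u78]
  · rw [e] at s5; rw [f] at s5 s8
    rcases hb b7 with m | m <;> rw [m] at s5 s8 s7 <;> linarith only [h4, h5, s5, s8, s7, l15, u15, l27, u27, l38, u38, l47, u47, l56, u56, l58, u58, l78, u78]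
  · rw [e] at s3; rw [f] at s3 s9
    rcases hb b4 with m | m <;> rw [m] at s3 s9 s4 <;> linarith only [h4, h5, s3, s9, s4, l03, u03, l14, u14, l38, u38, l39, u39, l47, u47, l49, u49, l69, u69]
  · rw [e] at s3; rw [f] at s3 s9
    rcases hb b6 with m | m <;> rw [m] at s3 s9 s6 <;> linarith only [h4, h5, s3, s9, s6, l03, u03, l26, u26, l38, u38, l39, u39, l49, u49, l56, u56, l69, u69]
  · rw [e] at s4; rw [f] at s4 s9
    rcases hb b6 with m | m <;> rw [m] at s4 s9 s6 <;> linarith only [h4, h5, s4, s9, s6, l14, u14, l26, u26, l39, u39, l47, u47, l49, u49, l56, u56, l69, u69]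

theorem lift_edge (r : ℝ) (z : AddCircle r)
    (hz : z ∈ (fun t : ℝ => (t : AddCircle r)) '' Set.Ioo 1 (r - 1)) :
    ∃ x : ℝ, z = x ∧ 1 < x ∧ x < r - 1 := by
  obtain ⟨x, ⟨h1, h2⟩, rfl⟩ := hz
  exact ⟨x, rfl, h1, h2⟩

theorem forward_core (r : ℝ) (h4 : 4 < r) (h5 : r < 5) (T : Fin 10 → Fin 10 → AddCircle r)
    (anti : ∀ i j, T i j = - T j i)
    (hT : ∀ i j, padj i j = true → ¬ (i = 0 ∧ j = 1) → ¬ (i = 1 ∧ j = 0) →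
      T i j ∈ (fun t : ℝ => (t : AddCircle r)) '' Set.Ioo 1 (r - 1))
    (hsum : ∀ i, (∑ j : Fin 10, if padj i j then T i j else 0) = 0)
    (x01 : ℝ) (e01 : T 0 1 = x01) (l01 : r - 4 ≤ x01) (u01 : x01 ≤ 4) : False := by
  have rev : ∀ i j, ∀ x : ℝ, T i j = x → T j i = ((r - x : ℝ) : AddCircle r) := by
    intro i j x h
    rw [anti, h, AddCircle.coe_sub, AddCircle.coe_period, zero_sub]
  obtain ⟨x02, e02, l02, u02⟩ := lift_edge r _ (hT 0 2 (by decide) (by decide) (by decide))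
  obtain ⟨x03, e03, l03, u03⟩ := lift_edge r _ (hT 0 3 (by decide) (by decide) (by decide))
  obtain ⟨x14, e14, l14, u14⟩ := lift_edge r _ (hT 1 4 (by decide) (by decide) (by decide))
  obtain ⟨x15, e15, l15, u15⟩ := lift_edge r _ (hT 1 5 (by decide) (by decide) (by decide))
  obtain ⟨x26, e26, l26, u26⟩ := lift_edge r _ (hT 2 6 (by decide) (by decide) (by decide))
  obtain ⟨x27, e27, l27, u27⟩ := lift_edge r _ (hT 2 7 (by decide) (by decide) (by decide))
  obtain ⟨x38, e38, l38, u38⟩ := lift_edge r _ (hT 3 8 (by decide) (by decide) (by decide))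
  obtain ⟨x39, e39, l39, u39⟩ := lift_edge r _ (hT 3 9 (by decide) (by decide) (by decide))
  obtain ⟨x47, e47, l47, u47⟩ := lift_edge r _ (hT 4 7 (by decide) (by decide) (by decide))
  obtain ⟨x49, e49, l49, u49⟩ := lift_edge r _ (hT 4 9 (by decide) (by decide) (by decide))
  obtain ⟨x56, e56, l56, u56⟩ := lift_edge r _ (hT 5 6 (by decide) (by decide) (by decide))
  obtain ⟨x58, e58, l58, u58⟩ := lift_edge r _ (hT 5 8 (by decide) (by decide) (by decide))
  obtain ⟨x69, e69, l69, u69⟩ := lift_edge r _ (hT 6 9 (by decide) (by decide) (by decide))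
  obtain ⟨x78, e78, l78, u78⟩ := lift_edge r _ (hT 7 8 (by decide) (by decide) (by decide))
  have t0 : T 0 1 + T 0 2 + T 0 3 = 0 := by
    rw [← hsum 0, ← Finset.sum_filter, show (Finset.univ.filter fun j => padj 0 j = true) = {1, 2, 3} by decide]
    rw [Finset.sum_insert (by decide), Finset.sum_insert (by decide), Finset.sum_singleton, add_assoc]
  rw [e01, e02, e03] at t0
  obtain ⟨b0, s0⟩ := vertex_lem r _ _ _ h4 t0 (by linarith) (by linarith)
  have t1 : T 1 0 + T 1 4 + T 1 5 = 0 := by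
    rw [← hsum 1, ← Finset.sum_filter, show (Finset.univ.filter fun j => padj 1 j = true) = {0, 4, 5} by decide]
    rw [Finset.sum_insert (by decide), Finset.sum_insert (by decide), Finset.sum_singleton, add_assoc]
  rw [rev 0 1 _ e01, e14, e15] at t1
  obtain ⟨b1, s1⟩ := vertex_lem r _ _ _ h4 t1 (by linarith) (by linarith)
  have t2 : T 2 0 + T 2 6 + T 2 7 = 0 := by
    rw [← hsum 2, ← Finset.sum_filter, show (Finset.univ.filter fun j => padj 2 j = true) = {0, 6, 7} by decide]
    rw [Finset.sum_insert (by decide), Finset.sum_insert (by decide), Finset.sum_singleton, add_assoc]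
  rw [rev 0 2 _ e02, e26, e27] at t2
  obtain ⟨b2, s2⟩ := vertex_lem r _ _ _ h4 t2 (by linarith) (by linarith)
  have t3 : T 3 0 + T 3 8 + T 3 9 = 0 := by
    rw [← hsum 3, ← Finset.sum_filter, show (Finset.univ.filter fun j => padj 3 j = true) = {0, 8, 9} by decide]
    rw [Finset.sum_insert (by decide), Finset.sum_insert (by decide), Finset.sum_singleton, add_assoc]
  rw [rev 0 3 _ e03, e38, e39] at t3
  obtain ⟨b3, s3⟩ := vertex_lem r _ _ _ h4 t3 (by linarith) (by linarith)
  have t4 : T 4 1 + T 4 7 + T 4 9 = 0 := by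
    rw [← hsum 4, ← Finset.sum_filter, show (Finset.univ.filter fun j => padj 4 j = true) = {1, 7, 9} by decide]
    rw [Finset.sum_insert (by decide), Finset.sum_insert (by decide), Finset.sum_singleton, add_assoc]
  rw [rev 1 4 _ e14, e47, e49] at t4
  obtain ⟨b4, s4⟩ := vertex_lem r _ _ _ h4 t4 (by linarith) (by linarith)
  have t5 : T 5 1 + T 5 6 + T 5 8 = 0 := by
    rw [← hsum 5, ← Finset.sum_filter, show (Finset.univ.filter fun j => padj 5 j = true) = {1, 6, 8} by decide]
    rw [Finset.sum_insert (by decide), Finset.sum_insert (by decide), Finset.sum_singleton, add_assoc]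
  rw [rev 1 5 _ e15, e56, e58] at t5
  obtain ⟨b5, s5⟩ := vertex_lem r _ _ _ h4 t5 (by linarith) (by linarith)
  have t6 : T 6 2 + T 6 5 + T 6 9 = 0 := by
    rw [← hsum 6, ← Finset.sum_filter, show (Finset.univ.filter fun j => padj 6 j = true) = {2, 5, 9} by decide]
    rw [Finset.sum_insert (by decide), Finset.sum_insert (by decide), Finset.sum_singleton, add_assoc]
  rw [rev 2 6 _ e26, rev 5 6 _ e56, e69] at t6
  obtain ⟨b6, s6⟩ := vertex_lem r _ _ _ h4 t6 (by linarith) (by linarith)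
  have t7 : T 7 2 + T 7 4 + T 7 8 = 0 := by
    rw [← hsum 7, ← Finset.sum_filter, show (Finset.univ.filter fun j => padj 7 j = true) = {2, 4, 8} by decide]
    rw [Finset.sum_insert (by decide), Finset.sum_insert (by decide), Finset.sum_singleton, add_assoc]
  rw [rev 2 7 _ e27, rev 4 7 _ e47, e78] at t7
  obtain ⟨b7, s7⟩ := vertex_lem r _ _ _ h4 t7 (by linarith) (by linarith)
  have t8 : T 8 3 + T 8 5 + T 8 7 = 0 := by
    rw [← hsum 8, ← Finset.sum_filter, show (Finset.univ.filter fun j => padj 8 j = true) = {3, 5, 7} by decide]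
    rw [Finset.sum_insert (by decide), Finset.sum_insert (by decide), Finset.sum_singleton, add_assoc]
  rw [rev 3 8 _ e38, rev 5 8 _ e58, rev 7 8 _ e78] at t8
  obtain ⟨b8, s8⟩ := vertex_lem r _ _ _ h4 t8 (by linarith) (by linarith)
  have t9 : T 9 3 + T 9 4 + T 9 6 = 0 := by
    rw [← hsum 9, ← Finset.sum_filter, show (Finset.univ.filter fun j => padj 9 j = true) = {3, 4, 6} by decide]
    rw [Finset.sum_insert (by decide), Finset.sum_insert (by decide), Finset.sum_singleton, add_assoc]
  rw [rev 3 9 _ e39, rev 4 9 _ e49, rev 6 9 _ e69] at t9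
  obtain ⟨b9, s9⟩ := vertex_lem r _ _ _ h4 t9 (by linarith) (by linarith)
  exact core_s19 r h4 h5 b0 b1 b2 b3 b4 b5 b6 b7 b8 b9 x01 x02 x03 x14 x15 x26 x27 x38 x39 x47 x49 x56 x58 x69 x78
    l01 u01 l02 u02 l03 u03 l14 u14 l15 u15 l26 u26 l27 u27 l38 u38 l39 u39 l47 u47 l49 u49 l56 u56 l58 u58 l69 u69 l78 u78
    s0 s1 s2 s3 s4 s5 s6 s7 s8 s9

noncomputable def mkΦ {M : Type*} [AddCommGroup M] (G : petersen.E → M) (a b : PV) : M :=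
  if h : Disjoint a.1 b.1 ∧ pkey a.1 < pkey b.1 then G ⟨(a, b), h⟩
  else if h : Disjoint b.1 a.1 ∧ pkey b.1 < pkey a.1 then - G ⟨(b, a), h⟩
  else 0

theorem mkΦ_anti {M : Type*} [AddCommGroup M] (G : petersen.E → M) (a b : PV) :
    mkΦ G a b = - mkΦ G b a := by
  unfold mkΦ
  by_cases h1 : Disjoint a.1 b.1 ∧ pkey a.1 < pkey b.1
  · have h2 : ¬ (Disjoint b.1 a.1 ∧ pkey b.1 < pkey a.1) := fun h => h.2.not_gt h1.2
    rw [dif_pos h1, dif_neg h2, dif_pos h1, neg_neg]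
  · by_cases h2 : Disjoint b.1 a.1 ∧ pkey b.1 < pkey a.1
    · rw [dif_neg h1, dif_pos h2, dif_pos h2]
    · rw [dif_neg h1, dif_neg h2, dif_neg h2, dif_neg h1, neg_zero]

theorem mkΦ_edge {M : Type*} [AddCommGroup M] (G : petersen.E → M) (e : petersen.E) :
    mkΦ G (petersen.src e) (petersen.tgt e) = G e := by
  unfold mkΦ
  exact dif_pos e.2

theorem forward (r : ℝ) (h4 : 4 < r) (h5 : r < 5) (e₀ : petersen.E) (t : AddCircle r)
    (ht : t ∈ CP r (petersen.deleteEdge e₀) (petersen.src e₀) (petersen.tgt e₀)) :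
    t ∈ (fun t : ℝ => (t : AddCircle r)) '' Set.Ioo 4 (2 * r - 4) := by
  obtain ⟨σ, f, hf, hcap, rfl⟩ := ht
  change Option {e : petersen.E // e ≠ e₀} → ℤˣ at σ
  change Option {e : petersen.E // e ≠ e₀} → AddCircle r at f
  rw [← signed_mem r 4 (2 * r - 4) 2 (by push_cast; ring) (σ none)]
  by_contra hcon
  let h : Option {e : petersen.E // e ≠ e₀} → AddCircle r := fun e => (σ e : ℤ) • f e
  have hh : ∀ e, h (some e) ∈ (fun t : ℝ => (t : AddCircle r)) '' Set.Ioo 1 (r - 1) := by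
    intro e
    refine (signed_mem r 1 (r - 1) 1 (by push_cast; ring) (σ (some e)) _).2 ?_
    rw [← arc1 r h4]
    exact hcap e
  let G : petersen.E → AddCircle r := fun e => if he : e = e₀ then h none else h (some ⟨e, he⟩)
  have hs : ∀ e : {e : petersen.E // e ≠ e₀}, h (some e) = mkΦ G (petersen.src e.1) (petersen.tgt e.1) := by
    intro e; rw [mkΦ_edge]; simp only [G]; rw [dif_neg e.2]
  have hn : h none = mkΦ G (petersen.src e₀) (petersen.tgt e₀) := by
    rw [mkΦ_edge]; simp [G]
  have hflow := (flow_iff e₀ h (mkΦ G) (mkΦ_anti G) hs hn).1 hf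
  obtain ⟨p, hp, p0, p1⟩ := exists_label e₀
  have r0 : 0 < r := by linarith
  have : Fact (0 < r) := ⟨r0⟩
  obtain ⟨x, ⟨hx1, hx2⟩, hx⟩ : ∃ x : ℝ, x ∈ Set.Ico (r - 4) (r - 4 + r) ∧ (x : AddCircle r) = h none := by
    have := AddCircle.coe_image_Ico_eq r (r - 4)
    have h' : h none ∈ (Set.univ : Set (AddCircle r)) := trivial
    rw [← this] at h'
    exact h'
  have hx4 : x ≤ 4 := by
    by_contra hlt
    exact hcon ⟨x, ⟨not_le.1 hlt, by linarith⟩, hx⟩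
  refine forward_core r h4 h5 (fun i j => mkΦ G (p i) (p j)) (fun i j => mkΦ_anti G _ _) ?_ ?_ x ?_ hx1 hx4
  · have main : ∀ e : petersen.E, e ≠ e₀ → G e ∈ (fun t : ℝ => (t : AddCircle r)) '' Set.Ioo 1 (r - 1) := by
      intro e he
      simp only [G]; rw [dif_neg he]; exact hh _
    have half : ∀ i j, padj i j = true → ¬ (i = 0 ∧ j = 1) → pkey (p i).1 < pkey (p j).1 →
        mkΦ G (p i) (p j) ∈ (fun t : ℝ => (t : AddCircle r)) '' Set.Ioo 1 (r - 1) := by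
      intro i j hij h01 hk
      have hd := (hp i j).2 hij
      have e1 := mkΦ_edge G ⟨(p i, p j), hd, hk⟩
      refine (congrArg (· ∈ _) e1).mpr (main _ ?_)
      rintro rfl
      exact h01 ⟨p.injective p0.symm, p.injective p1.symm⟩
    intro i j hij h01 h10
    have hd := (hp i j).2 hij
    rcases lt_or_gt_of_ne (pkey_ne _ _ hd) with hk | hk
    · exact half i j hij h01 hk
    · change mkΦ G (p i) (p j) ∈ _
      rw [mkΦ_anti]
      refine neg_image r 1 (r - 1) 1 (by push_cast; ring) _ (half j i ((hp j i).1 hd.symm) ?_ hk)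
      rintro ⟨a, b⟩
      exact h10 ⟨b, a⟩
  · intro i
    rw [← sum_label p hp]
    exact hflow (p i)
  · change mkΦ G (p 0) (p 1) = _
    rw [p0, p1, ← hn, hx]

/-- For every rational `r` with `4 < r < 5`, the open
`r`-capacity of the g-edge `P*₁₀(u,v)`, obtained from the Petersen graph by
deleting one edge `uv`, equals the open interval `(4, r-4)` of `ℝ/rℤ`. -/
theorem petersen_minus_edge_r_capacity (r : ℚ) (h4 : 4 < r) (h5 : r < 5)
    (e₀ : petersen.E) :
    CP (r : ℝ) (petersen.deleteEdge e₀) (petersen.src e₀) (petersen.tgt e₀)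
      = openArc (r : ℝ) 4 ((r : ℝ) - 4) := by
  have h4' : (4 : ℝ) < (r : ℝ) := by exact_mod_cast h4
  have h5' : (r : ℝ) < 5 := by exact_mod_cast h5
  rw [arc2 _ h4' h5']
  apply Set.Subset.antisymm
  · intro t ht
    exact forward _ h4' h5' e₀ t ht
  · rintro _ ⟨t, ⟨h1, h2⟩, rfl⟩
    have := backward (r : ℝ) h4' h5' e₀ (t - r) (by linarith) (by linarith)
    rwa [AddCircle.coe_sub, AddCircle.coe_period, sub_zero] at this
end
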